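/- arXiv:2306.11241 — 10 statements merged into one kernel-verified Lean document; each statement's English description precedes it below -/
import Mathlib

section
/- For every positive integers d and B and every instance I of {0,1} d-dimensional vector bin packing with bin size B, the first-fit packing satisfies FF(I) < (sqrt(2d) + 2) · OPT(I). -/
/-!
Let `m = OPT` and `K = FF`. In any packing into `m` bins, a coordinate `r` is used by at most
`m * B` items (`column_sum_le`). Call `r` full in a first-fit bin `j` if at least `B` items of bin
`j` use `r`. Then:

* an item placed in bin `k` was rejected by every bin `1 ≤ j < k`, so it uses some coordinate that
  is full in bin `j` (`exists_full`);
* a coordinate is full in at most `m` bins (`card_full_le`), so an item in bin `k` uses at least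
  `(k - 1) / m` coordinates (`bin_le`);
* every bin `j < K` has a full coordinate, hence at least `B` items, each using at least
  `(j - 1) / m` coordinates (`bin_weight`).

Counting pairs (item, used coordinate), which number at most `d * m * B`, gives
`B * ∑_{j < K} (j - 1) ≤ d * m² * B`, that is `(K - 1) * (K - 2) ≤ 2 * d * m²`
(`quadratic_bound`). Hence `K < √(2d) * m + 2`, which is at least as strong as the claim.
-/

/-- First-fit assignment for {0,1} d-dimensional vector bin packing with bin size B:
`firstFit d B v i` is the least positive bin index `j` such that adding `v i` to the
vectors among `v 0, …, v (i-1)` already assigned to bin `j` keeps every coordinate sum `≤ B`. -/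
noncomputable def firstFit (d B : ℕ) (v : ℕ → Fin d → ℕ) : ℕ → ℕ
  | i => sInf {j | 1 ≤ j ∧ ∀ r : Fin d,
      (∑ i' ∈ (Finset.range i).attach,
        if firstFit d B v i'.1 = j then v i'.1 r else 0) + v i r ≤ B}
termination_by i => i
decreasing_by exact Finset.mem_range.mp i'.2

/-- Number of bins used by first-fit on the instance `v 0, …, v (n-1)`. -/
noncomputable def ffBins (d B n : ℕ) (v : ℕ → Fin d → ℕ) : ℕ :=
  Finset.sup (Finset.range n) (firstFit d B v)

/-- Optimal number of bins: the least `m` such that `{0,…,n-1}` can be partitioned into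
`m` bins (fibers of `f`), each with every coordinate sum `≤ B`. -/
noncomputable def vbpOPT (d B n : ℕ) (v : ℕ → Fin d → ℕ) : ℕ :=
  sInf {m | ∃ f : ℕ → ℕ, (∀ i < n, f i < m) ∧
    ∀ j, ∀ r : Fin d, (∑ i ∈ Finset.range n, if f i = j then v i r else 0) ≤ B}

/-- The load of first-fit bin `j` in coordinate `r` after the items `0, …, n - 1` are packed. -/
noncomputable def ffLoad (d B n : ℕ) (v : ℕ → Fin d → ℕ) (j : ℕ) (r : Fin d) : ℕ :=
  ∑ i ∈ Finset.range n, if firstFit d B v i = j then v i r else 0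

lemma firstFit_eq (d B : ℕ) (v : ℕ → Fin d → ℕ) (i : ℕ) :
    firstFit d B v i = sInf {j | 1 ≤ j ∧ ∀ r : Fin d, ffLoad d B i v j r + v i r ≤ B} := by
  rw [firstFit]
  congr 1
  ext j
  refine and_congr_right fun _ => forall_congr' fun r => ?_
  rw [Finset.sum_attach (Finset.range i)
    (fun i' => if firstFit d B v i' = j then v i' r else 0), ffLoad]

lemma ffLoad_le {d B : ℕ} {v : ℕ → Fin d → ℕ} {j : ℕ} (hj : 1 ≤ j) (r : Fin d) (n : ℕ) :
    ffLoad d B n v j r ≤ B := by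
  induction n with
  | zero => simp [ffLoad]
  | succ n ih =>
    have hs : ffLoad d B (n + 1) v j r
        = ffLoad d B n v j r + if firstFit d B v n = j then v n r else 0 :=
      Finset.sum_range_succ _ _
    rw [hs]
    split_ifs with h
    · rw [firstFit_eq] at h
      -- The infimum `j` is positive, so it is not the default value on the empty set.
      have hmem := Nat.sInf_mem (Nat.nonempty_of_pos_sInf (by rw [h]; exact hj))
      rw [h] at hmem
      exact hmem.2 r
    · exact ih

lemma exists_full {d B n : ℕ} {v : ℕ → Fin d → ℕ} (hv : ∀ i, ∀ r : Fin d, v i r ≤ 1)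
    {i j : ℕ} (hi : i < n) (hj : 1 ≤ j) (hji : j < firstFit d B v i) :
    ∃ r, v i r = 1 ∧ B ≤ ffLoad d B n v j r := by
  rw [firstFit_eq] at hji
  have h := Nat.notMem_of_lt_sInf hji
  simp only [Set.mem_ofPred_eq, not_and, not_forall, not_le] at h
  obtain ⟨r, hr⟩ := h hj
  have hmono : ffLoad d B i v j r ≤ ffLoad d B n v j r :=
    Finset.sum_le_sum_of_subset (Finset.range_subset_range.mpr hi.le)
  have h1 := hv i r
  have h2 := ffLoad_le (B := B) (v := v) hj r i
  exact ⟨r, by omega, by omega⟩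

/-- An optimal packing exists, so each coordinate is used at most `OPT * B` times; the packing
into singletons shows that the infimum defining `vbpOPT` is attained. -/
lemma column_sum_le {d B n : ℕ} (hB : 1 ≤ B) (hn : 1 ≤ n) {v : ℕ → Fin d → ℕ}
    (hv : ∀ i, ∀ r : Fin d, v i r ≤ 1) :
    1 ≤ vbpOPT d B n v ∧ ∀ r, ∑ i ∈ Finset.range n, v i r ≤ vbpOPT d B n v * B := by
  have hne : {m | ∃ f : ℕ → ℕ, (∀ i < n, f i < m) ∧ ∀ j, ∀ r : Fin d,
      (∑ i ∈ Finset.range n, if f i = j then v i r else 0) ≤ B}.Nonempty := by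
    refine ⟨n, id, fun i hi => hi, fun j r => ?_⟩
    simp only [id, Finset.sum_ite_eq']
    split_ifs
    · exact (hv j r).trans hB
    · exact Nat.zero_le _
  obtain ⟨g, hg, hgB⟩ := Nat.sInf_mem hne
  change ∀ i < n, g i < vbpOPT d B n v at hg
  refine ⟨by have := hg 0 hn; omega, fun r => ?_⟩
  calc ∑ i ∈ Finset.range n, v i r
      = ∑ i ∈ Finset.range n, ∑ j ∈ Finset.range (vbpOPT d B n v),
          if g i = j then v i r else 0 := by
        refine Finset.sum_congr rfl fun i hi => ?_
        rw [Finset.sum_ite_eq, if_pos]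
        exact Finset.mem_range.mpr (hg i (Finset.mem_range.mp hi))
    _ = ∑ j ∈ Finset.range (vbpOPT d B n v), ∑ i ∈ Finset.range n,
          if g i = j then v i r else 0 := Finset.sum_comm
    _ ≤ ∑ _j ∈ Finset.range (vbpOPT d B n v), B := Finset.sum_le_sum fun j _ => hgB j r
    _ = vbpOPT d B n v * B := by simp

/-- Restricting a sum over items to those lying in a given set of bins. -/
lemma sum_bins_le {n : ℕ} (f w : ℕ → ℕ) (s : Finset ℕ) :
    ∑ j ∈ s, ∑ i ∈ Finset.range n, (if f i = j then w i else 0)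
      ≤ ∑ i ∈ Finset.range n, w i := by
  rw [Finset.sum_comm]
  refine Finset.sum_le_sum fun i _ => ?_
  rw [Finset.sum_ite_eq]
  split_ifs <;> simp

lemma card_full_le {d B n m : ℕ} (hB : 1 ≤ B) {v : ℕ → Fin d → ℕ} {r : Fin d}
    (hcol : ∑ i ∈ Finset.range n, v i r ≤ m * B) (s : Finset ℕ) :
    (s.filter fun j => B ≤ ffLoad d B n v j r).card ≤ m := by
  refine Nat.le_of_mul_le_mul_right (c := B) ?_ hB
  calc (s.filter fun j => B ≤ ffLoad d B n v j r).card * B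
      ≤ ∑ j ∈ s.filter (fun j => B ≤ ffLoad d B n v j r), ffLoad d B n v j r := by
        rw [← smul_eq_mul]
        exact Finset.card_nsmul_le_sum _ _ _ fun j hj => (Finset.mem_filter.mp hj).2
    _ ≤ ∑ i ∈ Finset.range n, v i r := sum_bins_le _ (fun i => v i r) _
    _ ≤ m * B := hcol

/-- An item in bin `t + 1` uses at least `t / m` coordinates. -/
lemma bin_le {d B n m : ℕ} (hB : 1 ≤ B) {v : ℕ → Fin d → ℕ}
    (hv : ∀ i, ∀ r : Fin d, v i r ≤ 1)
    (hcol : ∀ r, ∑ i ∈ Finset.range n, v i r ≤ m * B)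
    {i t : ℕ} (hi : i < n) (ht : firstFit d B v i = t + 1) :
    t ≤ m * ∑ r, v i r := by
  calc t = ∑ _j ∈ Finset.Ico 1 (t + 1), 1 := by simp
    _ ≤ ∑ j ∈ Finset.Ico 1 (t + 1), ∑ r, if B ≤ ffLoad d B n v j r then v i r else 0 := by
        refine Finset.sum_le_sum fun j hj => ?_
        rw [Finset.mem_Ico, ← ht] at hj
        obtain ⟨r, hr, hfull⟩ := exists_full hv hi hj.1 hj.2
        calc 1 = if B ≤ ffLoad d B n v j r then v i r else 0 := by rw [if_pos hfull, hr]
          _ ≤ _ := Finset.single_le_sum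
            (f := fun r => if B ≤ ffLoad d B n v j r then v i r else 0)
            (fun _ _ => Nat.zero_le _) (Finset.mem_univ r)
    _ = ∑ r, ∑ j ∈ Finset.Ico 1 (t + 1), if B ≤ ffLoad d B n v j r then v i r else 0 :=
        Finset.sum_comm
    _ ≤ ∑ r, m * v i r := by
        refine Finset.sum_le_sum fun r _ => ?_
        rw [← Finset.sum_filter, Finset.sum_const, smul_eq_mul]
        exact Nat.mul_le_mul_right _ (card_full_le hB (hcol r) _)
    _ = m * ∑ r, v i r := (Finset.mul_sum _ _ _).symm

/-- A bin `t + 1` with a full coordinate contains at least `B` items, so the total number of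
coordinates used by its items is at least `B * t / m`. -/
lemma bin_weight {d B n m : ℕ} (hB : 1 ≤ B) {v : ℕ → Fin d → ℕ}
    (hv : ∀ i, ∀ r : Fin d, v i r ≤ 1)
    (hcol : ∀ r, ∑ i ∈ Finset.range n, v i r ≤ m * B)
    {t : ℕ} {r : Fin d} (hfull : B ≤ ffLoad d B n v (t + 1) r) :
    B * t ≤ ∑ i ∈ Finset.range n,
      if firstFit d B v i = t + 1 then m * ∑ r, v i r else 0 := by
  calc B * t ≤ ffLoad d B n v (t + 1) r * t := Nat.mul_le_mul_right _ hfull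
    _ = ∑ i ∈ Finset.range n, (if firstFit d B v i = t + 1 then v i r else 0) * t := by
        rw [ffLoad, Finset.sum_mul]
    _ ≤ _ := by
        refine Finset.sum_le_sum fun i hi => ?_
        split_ifs with h
        · calc v i r * t ≤ 1 * t := Nat.mul_le_mul_right _ (hv i r)
            _ = t := one_mul t
            _ ≤ _ := bin_le hB hv hcol (Finset.mem_range.mp hi) h
        · simp

lemma quadratic_bound {d B n m : ℕ} (hB : 1 ≤ B) (hn : 1 ≤ n) {v : ℕ → Fin d → ℕ}
    (hv : ∀ i, ∀ r : Fin d, v i r ≤ 1)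
    (hcol : ∀ r, ∑ i ∈ Finset.range n, v i r ≤ m * B) :
    (ffBins d B n v - 1) * (ffBins d B n v - 1 - 1) ≤ 2 * d * m ^ 2 := by
  obtain ⟨i₀, hi₀, hK⟩ := Finset.exists_mem_eq_sup (Finset.range n)
    (Finset.nonempty_range_iff.mpr (by omega)) (firstFit d B v)
  change ffBins d B n v = _ at hK
  set K := ffBins d B n v
  have key : B * ∑ t ∈ Finset.range (K - 1), t ≤ B * (d * m ^ 2) := by
    calc B * ∑ t ∈ Finset.range (K - 1), t
        ≤ ∑ t ∈ Finset.range (K - 1), ∑ i ∈ Finset.range n,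
            if firstFit d B v i = t + 1 then m * ∑ r, v i r else 0 := by
          rw [Finset.mul_sum]
          refine Finset.sum_le_sum fun t ht => ?_
          rw [Finset.mem_range] at ht
          -- The item in the last bin was rejected by bin `t + 1`.
          obtain ⟨r, -, hfull⟩ := exists_full (B := B) hv (Finset.mem_range.mp hi₀)
            (Nat.le_add_left 1 t) (by omega)
          exact bin_weight hB hv hcol hfull
      _ = ∑ j ∈ (Finset.range (K - 1)).map (addRightEmbedding 1), ∑ i ∈ Finset.range n,
            if firstFit d B v i = j then m * ∑ r, v i r else 0 := by
          rw [Finset.sum_map]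
          rfl
      _ ≤ ∑ i ∈ Finset.range n, m * ∑ r, v i r :=
          sum_bins_le _ (fun i => m * ∑ r, v i r) _
      _ = m * ∑ r, ∑ i ∈ Finset.range n, v i r := by
          rw [← Finset.mul_sum, Finset.sum_comm]
      _ ≤ m * ∑ _r : Fin d, m * B :=
          Nat.mul_le_mul_left _ (Finset.sum_le_sum fun r _ => hcol r)
      _ = B * (d * m ^ 2) := by
          simp only [Finset.sum_const, Finset.card_univ, Fintype.card_fin, smul_eq_mul]
          ring
  have h2 := Finset.sum_range_id_mul_two (K - 1)
  have h3 := Nat.le_of_mul_le_mul_left key hB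
  linarith

/-- For every positive integers d and B and every nonempty instance of {0,1} d-dimensional
vector bin packing with bin size B, first-fit satisfies FF(I) < (√(2d) + 2) · OPT(I). -/
theorem firstFit_lt_sqrt_mul_opt (d B n : ℕ) (hd : 1 ≤ d) (hB : 1 ≤ B) (hn : 1 ≤ n)
    (v : ℕ → Fin d → ℕ) (hv : ∀ i, ∀ r : Fin d, v i r ≤ 1) :
    (ffBins d B n v : ℝ) < (Real.sqrt (2 * d) + 2) * (vbpOPT d B n v : ℝ) := by
  obtain ⟨hm, hcol⟩ := column_sum_le hB hn hv
  have hq := quadratic_bound hB hn hv hcol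
  generalize ffBins d B n v = K at hq ⊢
  generalize vbpOPT d B n v = m at hm hq ⊢
  have hm' : (1 : ℝ) ≤ m := by exact_mod_cast hm
  have hd' : (1 : ℝ) ≤ d := by exact_mod_cast hd
  have hs : 0 < Real.sqrt (2 * d) := Real.sqrt_pos.mpr (by linarith)
  have hsq : Real.sqrt (2 * d) ^ 2 = 2 * d := Real.sq_sqrt (by linarith)
  have hpos : 0 < Real.sqrt (2 * d) * m := by positivity
  suffices h : (K : ℝ) < Real.sqrt (2 * d) * m + 2 by linarith
  rcases le_or_gt K 2 with hK | hK
  · have : (K : ℝ) ≤ 2 := by exact_mod_cast hK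
    linarith
  · obtain ⟨k, rfl⟩ : ∃ k, K = k + 2 := ⟨K - 2, by omega⟩
    have hk : 0 < k := by omega
    have hq' : ((k : ℝ) + 1) * k ≤ 2 * d * m ^ 2 := by
      have : (k + 1) * k ≤ 2 * d * m ^ 2 := by simpa using hq
      exact_mod_cast this
    have hk' : (0 : ℝ) < k := by exact_mod_cast hk
    have hlt : (k : ℝ) < Real.sqrt (2 * d) * m := by
      refine lt_of_pow_lt_pow_left₀ 2 hpos.le ?_
      rw [mul_pow, hsq]
      nlinarith
    push_cast
    linarith
end

section
/- For every positive integer d there exists an instance I of {0,1} d-dimensional vector bin packing with bin size B = 1 such that OPT(I) = 2 and FF(I) > (sqrt(2d) − 1)/2; in particular the competitive ratio of first-fit is greater than (sqrt(2d) − 1)/4. -/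
/-- The crown-graph instance with `k = m + 1`: item `2p` is `a_p`, item `2q + 1` is `b_q`, and
coordinate `r = p * k + q` is the edge between `a_p` and `b_q`. The diagonal coordinates `p = q` are
switched off except for `p = q = m`, as are all coordinates `r ≥ k²`. -/
def badVec (d m : ℕ) (i : ℕ) (r : Fin d) : ℕ :=
  if r.1 < (m + 1) * (m + 1) ∧ (r.1 / (m + 1) ≠ r.1 % (m + 1) ∨ r.1 / (m + 1) = m) ∧
    i / 2 = (if i % 2 = 0 then r.1 / (m + 1) else r.1 % (m + 1)) then 1 else 0

lemma badVec_le_one (d m i : ℕ) (r : Fin d) : badVec d m i r ≤ 1 := by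
  unfold badVec; split_ifs <;> simp

/-- Conflicting items `a_p` and `b_q` share a coordinate. -/
lemma exists_common_coord {d m p q : ℕ} (hd : (m + 1) * (m + 1) ≤ d) (hp : p ≤ m) (hq : q ≤ m)
    (h : p ≠ q ∨ p = m) :
    ∃ r : Fin d, badVec d m (2 * p) r = 1 ∧ badVec d m (2 * q + 1) r = 1 := by
  have hlt : p * (m + 1) + q < (m + 1) * (m + 1) := by nlinarith
  have hdiv : (p * (m + 1) + q) / (m + 1) = p := by
    rw [add_comm, Nat.add_mul_div_right _ _ (Nat.succ_pos m), Nat.div_eq_of_lt (by omega), zero_add]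
  have hmod : (p * (m + 1) + q) % (m + 1) = q := by
    rw [add_comm, Nat.add_mul_mod_self_right, Nat.mod_eq_of_lt (by omega)]
  have hodd : (2 * q + 1) / 2 = q := by omega
  refine ⟨⟨p * (m + 1) + q, hlt.trans_le hd⟩, ?_, ?_⟩
  · simp [badVec, hdiv, hmod, hlt, h]
  · simp [badVec, hdiv, hmod, hlt, h, hodd]

lemma firstFit_eq_of {d B i t : ℕ} {v : ℕ → Fin d → ℕ} (ht : 1 ≤ t)
    (hfit : ∀ r, (∑ i' ∈ Finset.range i, if firstFit d B v i' = t then v i' r else 0)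
      + v i r ≤ B)
    (hno : ∀ j, 1 ≤ j → j < t → ∃ r,
      B < (∑ i' ∈ Finset.range i, if firstFit d B v i' = j then v i' r else 0) + v i r) :
    firstFit d B v i = t := by
  rw [firstFit]
  have hs : ∀ j r, (∑ i' ∈ (Finset.range i).attach,
        if firstFit d B v i'.1 = j then v i'.1 r else 0) =
      ∑ i' ∈ Finset.range i, if firstFit d B v i' = j then v i' r else 0 := fun j r =>
    Finset.sum_attach (Finset.range i) fun i' => if firstFit d B v i' = j then v i' r else 0
  simp only [hs]
  refine IsLeast.csInf_eq ⟨⟨ht, hfit⟩, ?_⟩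
  rintro j ⟨hj, hj'⟩
  by_contra! hlt
  obtain ⟨r, hr⟩ := hno j hj hlt
  exact absurd (hj' r) (by omega)

/-- The last item `2m + 1` is excluded: it also conflicts with `a_m`. -/
lemma firstFit_badVec {d m : ℕ} (hd : (m + 1) * (m + 1) ≤ d) (i : ℕ) (hi : i ≤ 2 * m) :
    firstFit d 1 (badVec d m) i = i / 2 + 1 := by
  induction i using Nat.strong_induction_on with
  | _ i ih =>
  apply firstFit_eq_of (by omega)
  · intro r
    -- The items preceding the pair `a_p, b_p` all lie in bins `≤ p`.
    have hzero : ∀ p, 2 * p ≤ i → p = i / 2 → (∑ i' ∈ Finset.range (2 * p),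
        if firstFit d 1 (badVec d m) i' = i / 2 + 1 then badVec d m i' r else 0) = 0 := by
      intro p hp hpi
      refine Finset.sum_eq_zero fun i' hi' => if_neg ?_
      rw [Finset.mem_range] at hi'
      rw [ih i' (by omega) (by omega)]
      omega
    obtain ⟨p, rfl | rfl⟩ := Nat.even_or_odd' i
    · rw [hzero p le_rfl (by omega), zero_add]
      exact badVec_le_one ..
    · rw [Finset.sum_range_succ, hzero p (by omega) (by omega), zero_add,
        ih (2 * p) (by omega) (by omega), if_pos (by omega)]
      -- A coordinate shared by `a_p` and `b_p` is diagonal, hence switched off as `p < m`.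
      have h1 : (2 * p + 1) / 2 = p := by omega
      have h2 : (2 * p + 1) % 2 = 1 := by omega
      simp only [badVec, h1, h2, Nat.mul_mod_right, if_true, one_ne_zero, if_false,
        Nat.mul_div_cancel_left p (Nat.succ_pos 1)]
      split_ifs <;> omega
  · intro j hj hji
    obtain ⟨q, rfl⟩ : ∃ q, j = q + 1 := ⟨j - 1, by omega⟩
    suffices h : ∃ r, badVec d m i r = 1 ∧ ∃ i' < i, i' / 2 = q ∧ badVec d m i' r = 1 by
      obtain ⟨r, hr, i', hi', hq, hr'⟩ := h
      refine ⟨r, ?_⟩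
      have := Finset.single_le_sum (f := fun i' =>
        if firstFit d 1 (badVec d m) i' = q + 1 then badVec d m i' r else 0)
        (fun _ _ => Nat.zero_le _) (Finset.mem_range.2 hi')
      simp only [ih i' hi' (by omega), hq, if_true, hr'] at this
      omega
    obtain ⟨p, rfl | rfl⟩ := Nat.even_or_odd' i
    · obtain ⟨r, h1, h2⟩ := exists_common_coord (p := p) (q := q) hd (by omega) (by omega)
        (Or.inl (by omega))
      exact ⟨r, h1, 2 * q + 1, by omega, by omega, h2⟩
    · obtain ⟨r, h1, h2⟩ := exists_common_coord (p := q) (q := p) hd (by omega) (by omega)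
        (Or.inl (by omega))
      exact ⟨r, h2, 2 * q, by omega, by omega, h1⟩

lemma vbpOPT_badVec {d m : ℕ} (hd : (m + 1) * (m + 1) ≤ d) :
    vbpOPT d 1 (2 * m + 2) (badVec d m) = 2 := by
  refine IsLeast.csInf_eq ⟨⟨fun i => i % 2, fun i _ => Nat.mod_lt _ two_pos, ?_⟩, ?_⟩
  · intro j r
    -- Each coordinate occurs in at most one item `a_p` and in at most one item `b_q`.
    set c := if j = 0 then 2 * (r.1 / (m + 1)) else 2 * (r.1 % (m + 1)) + 1 with hc
    calc (∑ i ∈ Finset.range (2 * m + 2), if i % 2 = j then badVec d m i r else 0)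
        ≤ ∑ i ∈ Finset.range (2 * m + 2), if i = c then 1 else 0 := by
          refine Finset.sum_le_sum fun i _ => ?_
          unfold badVec
          split_ifs at * <;> omega
      _ ≤ 1 := by
          rw [Finset.sum_ite_eq']
          split_ifs <;> simp
  · rintro b ⟨f, hf, hsum⟩
    by_contra! hb
    have h0 : ∀ i < 2 * m + 2, f i = 0 := fun i hi => by have := hf i hi; omega
    obtain ⟨r, h1, h2⟩ := exists_common_coord (p := m) (q := m) hd le_rfl le_rfl (Or.inr rfl)
    have := hsum 0 r
    rw [Finset.sum_range_succ, Finset.sum_range_succ, h0 _ (by omega), h0 _ (by omega),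
      if_pos rfl, if_pos rfl, h1, h2] at this
    omega

/-- For every positive d there is a {0,1} d-dimensional instance with bin size 1 on which
OPT = 2 and FF > (√(2d) − 1)/2; in particular first-fit's ratio exceeds (√(2d) − 1)/4. -/
theorem exists_bad_instance_firstFit (d : ℕ) (hd : 1 ≤ d) :
    ∃ n : ℕ, 1 ≤ n ∧ ∃ v : ℕ → Fin d → ℕ, (∀ i, ∀ r : Fin d, v i r ≤ 1) ∧
      vbpOPT d 1 n v = 2 ∧
      (Real.sqrt (2 * d) - 1) / 2 < (ffBins d 1 n v : ℝ) ∧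
      (Real.sqrt (2 * d) - 1) / 4 < (ffBins d 1 n v : ℝ) / (vbpOPT d 1 n v : ℝ) := by
  obtain ⟨m, hm⟩ : ∃ m, Nat.sqrt d = m + 1 :=
    ⟨Nat.sqrt d - 1, by have := Nat.sqrt_pos.2 hd; omega⟩
  have hle : (m + 1) * (m + 1) ≤ d := hm ▸ Nat.sqrt_le d
  have hlt : d < (m + 2) * (m + 2) := by
    simpa [hm] using Nat.lt_succ_sqrt d
  have hopt := vbpOPT_badVec hle
  have hff : m + 1 ≤ ffBins d 1 (2 * m + 2) (badVec d m) := by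
    have := Finset.le_sup (f := firstFit d 1 (badVec d m))
      (Finset.mem_range.2 (by omega : 2 * m < 2 * m + 2))
    rw [firstFit_badVec hle _ le_rfl] at this
    unfold ffBins
    omega
  have hff' : (m : ℝ) + 1 ≤ (ffBins d 1 (2 * m + 2) (badVec d m) : ℝ) := by exact_mod_cast hff
  have hsqrt : Real.sqrt (2 * d) < 2 * m + 3 := by
    rw [Real.sqrt_lt' (by positivity)]
    have : (d : ℝ) < (m + 2) * (m + 2) := by exact_mod_cast hlt
    nlinarith [(Nat.cast_nonneg m : (0 : ℝ) ≤ m)]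
  refine ⟨2 * m + 2, by omega, badVec d m, badVec_le_one d m, hopt, by linarith, ?_⟩
  rw [hopt]
  push_cast
  linarith
end

section
/- There exists d₀ such that for every d ≥ d₀ and every valid deterministic online algorithm A for {0,1} d-dimensional vector bin packing with bin size B = 1, there exists an instance I with OPT(I) ≤ log₂(sqrt(2d) + 1) and A(I)/OPT(I) > 2(sqrt(2d) − 1)/(log₂(sqrt(2d) − 1))². -/
/-- The bin assigned to the i-th vector by an online algorithm `A` (which sees `v 0, …, v i`). -/
def algAssign (d : ℕ) (A : List (Fin d → ℕ) → ℕ) (v : ℕ → Fin d → ℕ) (i : ℕ) : ℕ :=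
  A ((List.range (i + 1)).map v)

/-- A deterministic online algorithm is valid if on every {0,1} input sequence every
resulting bin is feasible (coordinate sums `≤ B`). -/
def ValidAlg (d B : ℕ) (A : List (Fin d → ℕ) → ℕ) : Prop :=
  ∀ n : ℕ, ∀ v : ℕ → Fin d → ℕ, (∀ i r, v i r ≤ 1) →
    ∀ j, ∀ r : Fin d,
      (∑ i ∈ Finset.range n, if algAssign d A v i = j then v i r else 0) ≤ B

/-- Number of distinct bins used by `A` on the instance `v 0, …, v (n-1)`. -/
def algBins (d n : ℕ) (A : List (Fin d → ℕ) → ℕ) (v : ℕ → Fin d → ℕ) : ℕ :=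
  ((Finset.range n).image (algAssign d A v)).card

/-- The vector of vertex `i`, where coordinate `r` encodes the pair `p r = (a, b)`: the entry is one
if `i = a`, or if `i = b` and `i` is adjacent to `a`, that is, `a < b` and the hidden colour `c a`
is outside the palette `S b`. -/
def vec {d k : ℕ} (p : Fin d → ℕ × ℕ) (c : ℕ → Fin k) (S : ℕ → Finset (Fin k))
    (i : ℕ) (r : Fin d) : ℕ :=
  if (p r).1 = i ∨ ((p r).2 = i ∧ (p r).1 < i ∧ c (p r).1 ∉ S i) then 1 else 0

/-- `Good p A c S t`: on the first `t` vertices, palettes have size `m`, every hidden colour lies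
in its palette, and vertices in a common bin of `A` have distinct hidden colours. -/
def Good {d m : ℕ} (p : Fin d → ℕ × ℕ) (A : List (Fin d → ℕ) → ℕ)
    (c : ℕ → Fin (2 * m)) (S : ℕ → Finset (Fin (2 * m))) (t : ℕ) : Prop :=
  (∀ i < t, (S i).card = m ∧ c i ∈ S i) ∧
    ∀ j < t, ∀ i < j, algAssign d A (vec p c S) i = algAssign d A (vec p c S) j → c i ≠ c j

lemma vec_le_one {d k : ℕ} (p : Fin d → ℕ × ℕ) (c : ℕ → Fin k) (S : ℕ → Finset (Fin k))
    (i : ℕ) (r : Fin d) : vec p c S i r ≤ 1 := by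
  unfold vec; split_ifs <;> simp

lemma algAssign_congr {d : ℕ} (A : List (Fin d → ℕ) → ℕ) {v w : ℕ → Fin d → ℕ} {i : ℕ}
    (h : ∀ j ≤ i, v j = w j) : algAssign d A v i = algAssign d A w i := by
  unfold algAssign
  congr 1
  apply List.map_congr_left
  intro j hj
  exact h j (by simpa [Nat.lt_succ_iff] using hj)

/-- The vector of a vertex depends only on its palette and on the earlier hidden colours. -/
lemma vec_congr {d k : ℕ} (p : Fin d → ℕ × ℕ) {c c' : ℕ → Fin k} {S S' : ℕ → Finset (Fin k)}
    {i : ℕ} (hc : ∀ j < i, c j = c' j) (hS : S i = S' i) : vec p c S i = vec p c' S' i := by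
  funext r
  unfold vec
  rw [hS]
  by_cases h : (p r).1 < i
  · rw [hc _ h]
  · simp [h]

/-- There are enough coordinates to encode all pairs `a < b < n`. -/
lemma exists_pairing {d n : ℕ} (h : n * n ≤ 2 * d) :
    ∃ p : Fin d → ℕ × ℕ, ∀ b < n, ∀ a < b, ∃ r, p r = (a, b) := by
  classical
  set P : Finset (ℕ × ℕ) := (Finset.range n).biUnion fun b => (Finset.range b).image fun a => (a, b)
  have hP : P.card ≤ d := by
    have h1 : P.card ≤ ∑ b ∈ Finset.range n, b := by
      refine Finset.card_biUnion_le.trans (Finset.sum_le_sum fun b _ => ?_)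
      exact Finset.card_image_le.trans (by simp)
    have h2 := Finset.sum_range_id_mul_two n
    have h3 : n * (n - 1) ≤ n * n := Nat.mul_le_mul_left _ (Nat.sub_le _ _)
    omega
  refine ⟨fun r => P.toList.getD r (0, 0), fun b hb a ha => ?_⟩
  have hm : (a, b) ∈ P.toList := by
    simp only [P, Finset.mem_toList, Finset.mem_biUnion, Finset.mem_image, Finset.mem_range]
    exact ⟨b, hb, a, ha, rfl⟩
  obtain ⟨i, hi, hii⟩ := List.getElem_of_mem hm
  have hid : i < d := by
    rw [Finset.length_toList] at hi; omega
  exact ⟨⟨i, hid⟩, (List.getD_eq_getElem _ _ hi).trans hii⟩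

/-- Vertices packed together by a valid algorithm are non-adjacent. -/
lemma mem_palette {d k n : ℕ} {p : Fin d → ℕ × ℕ} (hp : ∀ b < n, ∀ a < b, ∃ r, p r = (a, b))
    {A : List (Fin d → ℕ) → ℕ} (hA : ValidAlg d 1 A) (c : ℕ → Fin k) (S : ℕ → Finset (Fin k))
    {i j : ℕ} (hj : j < n) (hij : i < j)
    (h : algAssign d A (vec p c S) i = algAssign d A (vec p c S) j) : c i ∈ S j := by
  by_contra hc
  obtain ⟨r, hr⟩ := hp j hj i hij
  have h1 := hA (j + 1) (vec p c S) (vec_le_one p c S) (algAssign d A (vec p c S) j) r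
  have hsub : ({i, j} : Finset ℕ) ⊆ Finset.range (j + 1) := by
    intro x hx
    simp only [Finset.mem_insert, Finset.mem_singleton] at hx
    simp only [Finset.mem_range]; omega
  have h2 := (Finset.sum_le_sum_of_subset hsub (f := fun x =>
    if algAssign d A (vec p c S) x = algAssign d A (vec p c S) j then vec p c S x r else 0)).trans h1
  rw [Finset.sum_pair hij.ne] at h2
  simp [h, vec, hr, hc, hij] at h2

/-- As long as fewer than `m * (2m choose m)` vertices have appeared, some `m`-set of colours is not
the colour set of any bin: a bin with `m` colours has at least `m` vertices. -/
lemma exists_palette {m t : ℕ} (ht : t < m * m.centralBinom) (c : ℕ → Fin (2 * m)) (g : ℕ → ℕ) :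
    ∃ T : Finset (Fin (2 * m)), T.card = m ∧
      ∀ b, ((Finset.range t).filter fun i => g i = b).image c ≠ T := by
  classical
  by_contra! hcon
  choose! b hb using hcon
  set X : Finset (Fin (2 * m)) → Finset ℕ := fun T => (Finset.range t).filter fun i => g i = b T
  set Q := (Finset.univ : Finset (Fin (2 * m))).powersetCard m
  have hQ : ∀ T ∈ Q, T.card = m := fun T hT => (Finset.mem_powersetCard.1 hT).2
  have hdis : (Q : Set (Finset (Fin (2 * m)))).PairwiseDisjoint X := by
    intro T hT T' hT' hne
    refine Finset.disjoint_left.2 fun i hi hi' => hne ?_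
    simp only [X, Finset.mem_filter] at hi hi'
    rw [← hb T (hQ T hT), ← hb T' (hQ T' hT'), ← hi.2, ← hi'.2]
  have h1 : (Q.biUnion X).card ≤ t := by
    refine (Finset.card_le_card (t := Finset.range t) ?_).trans (by simp)
    exact Finset.biUnion_subset.2 fun T _ => Finset.filter_subset _ _
  rw [Finset.card_biUnion hdis] at h1
  have h2 : Q.card • m ≤ ∑ T ∈ Q, (X T).card := by
    refine Finset.card_nsmul_le_sum _ _ _ fun T hT => ?_
    have := hb T (hQ T hT)
    calc m = T.card := (hQ T hT).symm
      _ = ((X T).image c).card := by rw [this]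
      _ ≤ _ := Finset.card_image_le
  have h3 : Q.card = m.centralBinom := by simp [Q, Nat.centralBinom]
  rw [h3, smul_eq_mul, mul_comm] at h2
  omega

lemma exists_adversary {d m n : ℕ} (hm : 0 < m) {p : Fin d → ℕ × ℕ}
    (hp : ∀ b < n, ∀ a < b, ∃ r, p r = (a, b))
    {A : List (Fin d → ℕ) → ℕ} (hA : ValidAlg d 1 A) (hn : n ≤ m * m.centralBinom) :
    ∀ t ≤ n, ∃ c S, Good (m := m) p A c S t := by
  classical
  intro t
  induction t with
  | zero => exact fun _ => ⟨fun _ => ⟨0, by omega⟩, fun _ => ∅, by simp [Good]⟩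
  | succ t ih =>
    intro ht
    obtain ⟨c, S, hcS, hinj⟩ := ih (by omega)
    set g := algAssign d A (vec p c S) with hg
    obtain ⟨T, hTm, hT⟩ := exists_palette (m := m) (t := t) (by omega) c g
    set S' := Function.update S t T with hS'
    have hSt : S' t = T := by simp [hS']
    have hSlt : ∀ i < t, S' i = S i := fun i hi => by simp [hS', hi.ne]
    set b := algAssign d A (vec p c S') t with hb
    -- Changing the data at `t` affects no earlier vector, hence no earlier bin.
    have hold : ∀ i < t, algAssign d A (vec p c S') i = g i := fun i hi =>
      algAssign_congr A fun j hj => vec_congr p (fun _ _ => rfl) (hSlt j (by omega))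
    have hsub : ((Finset.range t).filter fun i => g i = b).image c ⊆ T := by
      intro x hx
      simp only [Finset.mem_image, Finset.mem_filter, Finset.mem_range] at hx
      obtain ⟨i, ⟨hi, hgi⟩, rfl⟩ := hx
      rw [← hSt]
      exact mem_palette hp hA c S' (by omega) hi (by rw [hold i hi, hgi])
    obtain ⟨x, hxT, hx⟩ := Finset.exists_of_ssubset (hsub.ssubset_of_ne (hT b))
    set c' := Function.update c t x with hc'
    have hct : c' t = x := by simp [hc']
    have hclt : ∀ i < t, c' i = c i := fun i hi => by simp [hc', hi.ne]
    -- The hidden colour of `t` is not visible in the vectors up to and including `t`.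
    have hnew : ∀ i ≤ t, algAssign d A (vec p c' S') i = algAssign d A (vec p c S') i :=
      fun i hi => algAssign_congr A fun j hj => vec_congr p (fun l hl => hclt l (by omega)) rfl
    refine ⟨c', S', fun i hi => ?_, fun j hj i hij hbin => ?_⟩
    · rcases Nat.lt_succ_iff_lt_or_eq.1 hi with h | rfl
      · rw [hSlt i h, hclt i h]; exact hcS i h
      · rw [hSt, hct]; exact ⟨hTm, hxT⟩
    · rw [hnew i (by omega), hnew j (by omega)] at hbin
      rcases Nat.lt_succ_iff_lt_or_eq.1 hj with h | rfl
      · rw [hold i (by omega), hold j h] at hbin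
        rw [hclt i (by omega), hclt j h]
        exact hinj j h i hij hbin
      · rw [hct, hclt i hij]
        rw [hold i hij] at hbin
        rintro rfl
        exact hx (Finset.mem_image.2 ⟨i, by simp [hij, hbin, hb], rfl⟩)

/-- The hidden colours form a feasible packing. -/
lemma opt_le {d m n : ℕ} {p : Fin d → ℕ × ℕ} {A : List (Fin d → ℕ) → ℕ}
    {c : ℕ → Fin (2 * m)} {S : ℕ → Finset (Fin (2 * m))} (h : Good p A c S n) :
    2 * m ∈ {m | ∃ f : ℕ → ℕ, (∀ i < n, f i < m) ∧
    ∀ j, ∀ r : Fin d, (∑ i ∈ Finset.range n, if f i = j then vec p c S i r else 0) ≤ 1} := by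
  refine ⟨fun i => c i, fun i _ => (c i).2, fun j r => ?_⟩
  simp only [vec, ← ite_and]
  rw [← Finset.card_filter, Finset.card_le_one]
  -- Two vertices with a one in coordinate `r` are adjacent, so their colours differ.
  have key : ∀ a < n, c (p r).1 = c a → ¬ ((p r).2 = a ∧ (p r).1 < a ∧ c (p r).1 ∉ S a) := by
    rintro a ha hca ⟨-, -, h3⟩
    exact h3 (hca ▸ (h.1 a ha).2)
  intro a ha b hb
  simp only [Finset.mem_filter, Finset.mem_range] at ha hb
  obtain ⟨han, hac, ha⟩ := ha
  obtain ⟨hbn, hbc, hb⟩ := hb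
  have hab : c a = c b := Fin.ext (hac.trans hbc.symm)
  rcases ha with ha | ha <;> rcases hb with hb | hb
  · omega
  · exact absurd hb (key b hbn (by rw [ha, hab]))
  · exact absurd ha (key a han (by rw [hb, hab]))
  · omega

/-- Every bin of the algorithm holds at most `m` vertices: their colours are distinct and belong to
the palette of the last vertex of the bin. -/
lemma le_mul_algBins {d m n : ℕ} {p : Fin d → ℕ × ℕ}
    (hp : ∀ b < n, ∀ a < b, ∃ r, p r = (a, b))
    {A : List (Fin d → ℕ) → ℕ} (hA : ValidAlg d 1 A)
    {c : ℕ → Fin (2 * m)} {S : ℕ → Finset (Fin (2 * m))} (h : Good p A c S n) :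
    n ≤ m * algBins d n A (vec p c S) := by
  classical
  set g := algAssign d A (vec p c S)
  have := Finset.card_le_mul_card_image (f := g) (Finset.range n) m (fun b hb => ?_)
  · simpa [algBins] using this
  · set X := (Finset.range n).filter fun i => g i = b
    have hX : ∀ i ∈ X, i < n ∧ g i = b := fun i hi => by simpa [X] using hi
    have hne : X.Nonempty := by
      obtain ⟨i, hi, hib⟩ := Finset.mem_image.1 hb
      exact ⟨i, Finset.mem_filter.2 ⟨hi, hib⟩⟩
    obtain ⟨hjn, hjb⟩ := hX _ (X.max'_mem hne)
    rw [← (h.1 _ hjn).1]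
    refine Finset.card_le_card_of_injOn c (fun i hi => ?_) (fun i hi i' hi' hii => ?_)
    · rcases (X.le_max' i hi).lt_or_eq with hlt | heq
      · exact mem_palette hp hA c S hjn hlt ((hX i hi).2.trans hjb.symm)
      · have := (h.1 i (hX i hi).1).2
        rw [← heq]; exact this
    · have h1 := hX i hi
      have h2 := hX i' hi'
      rcases lt_trichotomy i i' with hlt | heq | hlt
      · exact absurd hii (h.2 i' h2.1 i hlt (h1.2.trans h2.2.symm))
      · exact heq
      · exact absurd hii.symm (h.2 i h1.1 i' hlt (h2.2.trans h1.2.symm))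

lemma four_pow_succ_le (m : ℕ) (hm : 64 ≤ m) : 4 ^ (m + 1) ≤ m * m.centralBinom := by
  induction m, hm using Nat.le_induction with
  | base => norm_num [Nat.centralBinom, Nat.choose_eq_descFactorial_div_factorial]
  | succ m _ ih =>
    rw [Nat.succ_mul_centralBinom_succ, pow_succ]
    nlinarith [Nat.zero_le m.centralBinom]

/-- For all large enough d and every valid deterministic online algorithm for
{0,1} d-dimensional VBP with bin size 1, there is an instance with
OPT ≤ log₂(√(2d)+1) and ratio > 2(√(2d)−1)/(log₂(√(2d)−1))². -/
theorem online_lower_bound_B_one :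
    ∃ d₀ : ℕ, ∀ d : ℕ, d₀ ≤ d → ∀ A : List (Fin d → ℕ) → ℕ, ValidAlg d 1 A →
      ∃ n : ℕ, 1 ≤ n ∧ ∃ v : ℕ → Fin d → ℕ, (∀ i, ∀ r : Fin d, v i r ≤ 1) ∧
        (vbpOPT d 1 n v : ℝ) ≤ Real.logb 2 (Real.sqrt (2 * d) + 1) ∧
        2 * (Real.sqrt (2 * d) - 1) / (Real.logb 2 (Real.sqrt (2 * d) - 1)) ^ 2
          < (algBins d n A v : ℝ) / (vbpOPT d 1 n v : ℝ) := by
  refine ⟨4 ^ 140, fun d hd A hA => ?_⟩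
  set n := Nat.sqrt (2 * d) with hn
  set m := Nat.log 4 (n - 1) with hm
  have hnbig : 4 ^ 64 + 1 ≤ n := by
    rw [hn, Nat.le_sqrt]
    refine le_trans ?_ (Nat.mul_le_mul_left 2 hd)
    norm_num
  have hm64 : 64 ≤ m := Nat.le_log_of_pow_le (by norm_num) (by omega)
  have hnm : n ≤ m * m.centralBinom := by
    have h1 : n - 1 < 4 ^ (m + 1) := Nat.lt_pow_succ_log_self (by norm_num) _
    exact le_trans (by omega) (four_pow_succ_le m hm64)
  obtain ⟨p, hp⟩ := exists_pairing (Nat.sqrt_le (2 * d))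
  obtain ⟨c, S, hgood⟩ := exists_adversary (by omega) hp hA hnm n le_rfl
  have hmem := opt_le hgood
  have hbins := le_mul_algBins hp hA hgood
  have hopt : vbpOPT d 1 n (vec p c S) ≤ 2 * m := Nat.sInf_le hmem
  have hpos : 0 < vbpOPT d 1 n (vec p c S) := by
    obtain ⟨f, hf, -⟩ := Nat.sInf_mem ⟨_, hmem⟩
    exact (Nat.zero_le _).trans_lt (hf 0 (by omega))
  -- Real-number bounds: `n ≤ √(2d) < n + 1` and `2m ≤ log₂ (√(2d) - 1)`.
  set s := Real.sqrt (2 * d) with hs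
  have hns : (n : ℝ) ≤ s := by
    apply Real.le_sqrt_of_sq_le
    have := Nat.sqrt_le (2 * d)
    rw [sq]; exact_mod_cast this
  have hsn : s < n + 1 := by
    rw [hs, Real.sqrt_lt' (by positivity), sq]
    exact_mod_cast Nat.lt_succ_sqrt (2 * d)
  have hpow : (2 : ℝ) ^ (2 * m) ≤ s - 1 := by
    have h1 : 4 ^ m ≤ n - 1 := Nat.pow_log_le_self 4 (by omega)
    have h2 : ((4 ^ m + 1 : ℕ) : ℝ) ≤ n := by
      exact_mod_cast (show 4 ^ m + 1 ≤ n by omega)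
    push_cast at h2
    rw [pow_mul]; norm_num
    linarith
  have hs1 : 0 < s - 1 := lt_of_lt_of_le (by positivity) hpow
  have hlog : ((2 * m : ℕ) : ℝ) ≤ Real.logb 2 (s - 1) := by
    rw [Real.le_logb_iff_rpow_le (by norm_num) hs1, Real.rpow_natCast]
    exact hpow
  have hm0 : (0 : ℝ) < m := by exact_mod_cast (show 0 < m by omega)
  refine ⟨n, by omega, vec p c S, vec_le_one p c S, ?_, ?_⟩
  · have h1 : Real.logb 2 (s - 1) ≤ Real.logb 2 (s + 1) :=
      Real.logb_le_logb_of_le (by norm_num) hs1 (by linarith)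
    have h2 : (vbpOPT d 1 n (vec p c S) : ℝ) ≤ ((2 * m : ℕ) : ℝ) := by exact_mod_cast hopt
    linarith
  · push_cast at hlog
    have hO : (0 : ℝ) < vbpOPT d 1 n (vec p c S) := by exact_mod_cast hpos
    have hO' : (vbpOPT d 1 n (vec p c S) : ℝ) ≤ 2 * m := by exact_mod_cast hopt
    have hb : (n : ℝ) ≤ m * algBins d n A (vec p c S) := by exact_mod_cast hbins
    calc 2 * (s - 1) / Real.logb 2 (s - 1) ^ 2 ≤ 2 * (s - 1) / (2 * (m : ℝ)) ^ 2 := by gcongr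
      _ < 2 * (n : ℝ) / (2 * m) ^ 2 := by gcongr; linarith
      _ = (n : ℝ) / m / (2 * m) := by field_simp
      _ ≤ (algBins d n A (vec p c S) : ℝ) / (2 * m) := by
        gcongr
        rw [div_le_iff₀ hm0, mul_comm]
        exact hb
      _ ≤ (algBins d n A (vec p c S) : ℝ) / vbpOPT d 1 n (vec p c S) := by gcongr
end

section
/- For every integer B ≥ 2 there exists d₀ such that for every d ≥ d₀ and every valid deterministic online algorithm A for {0,1} d-dimensional vector bin packing with bin size B, there exists an instance I with OPT(I) = 2 and A(I)/OPT(I) > (((B+1)! · d)^{1/(B+1)} − 1)/(2B). -/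
/-- With `f` the assignment of items to bins, item `j` has the second of the two colours: `j` is
the first item of its bin, item `0` being disregarded (it always has the first colour). -/
def Coloured (f : ℕ → ℕ) (j : ℕ) : Prop :=
  j ≠ 0 ∧ ∀ k, 0 < k → k < j → f k ≠ f j

/-- Item `i` has a `1` in the coordinate of the item set `e`: `i` is in `e` and, if `i` is the last
item of `e`, both colours occur among the earlier items of `e`. -/
def Hits (f : ℕ → ℕ) (e : Finset ℕ) (i : ℕ) : Prop :=
  i ∈ e ∧ ((∀ j ∈ e, j ≤ i) →
    ∃ j ∈ e, ∃ k ∈ e, j < i ∧ k < i ∧ Coloured f j ∧ ¬ Coloured f k)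

lemma coloured_congr {f g : ℕ → ℕ} {i j : ℕ} (h : ∀ k < i, f k = g k) (hj : j < i) :
    Coloured f j ↔ Coloured g j := by
  unfold Coloured
  refine and_congr Iff.rfl (forall_congr' fun k => forall_congr' fun _ => forall_congr' fun hk => ?_)
  rw [h k (hk.trans hj), h j hj]

/-- Whether item `i` has a `1` depends only on the placement of earlier items, so the adversary's
strategy is well defined. -/
lemma hits_congr {f g : ℕ → ℕ} {i : ℕ} (h : ∀ k < i, f k = g k) (e : Finset ℕ) :
    Hits f e i ↔ Hits g e i := by
  unfold Hits
  refine and_congr Iff.rfl (forall_congr' fun _ => ?_)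
  constructor
  · rintro ⟨j, hj, k, hk, hji, hki, h1, h2⟩
    exact ⟨j, hj, k, hk, hji, hki, (coloured_congr h hji).1 h1,
      fun h3 => h2 ((coloured_congr h hki).2 h3)⟩
  · rintro ⟨j, hj, k, hk, hji, hki, h1, h2⟩
    exact ⟨j, hj, k, hk, hji, hki, (coloured_congr h hji).2 h1,
      fun h3 => h2 ((coloured_congr h hki).1 h3)⟩

lemma exists_list_rec {V : Type*} (step : List V → V) :
    ∃ v : ℕ → V, ∀ i, v i = step ((List.range i).map v) := by
  let L : ℕ → List V := fun n => Nat.rec [] (fun _ l => l ++ [step l]) n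
  refine ⟨fun i => step (L i), fun i => ?_⟩
  have h : ∀ n, L n = (List.range n).map (fun i => step (L i)) := by
    intro n
    induction n with
    | zero => rfl
    | succ n ih =>
      rw [List.range_succ, List.map_append, ← ih]
      rfl
  exact congrArg step (h i)

open Classical in
/-- The adversary's instance: an input sequence consistent with the placements that the algorithm
makes on it. -/
lemma exists_adversary_s7 (d : ℕ) (A : List (Fin d → ℕ) → ℕ) (E : Fin d → Finset ℕ) :
    ∃ v : ℕ → Fin d → ℕ, ∀ i r,
      v i r = if Hits (algAssign d A v) (E r) i then 1 else 0 := by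
  obtain ⟨v, hv⟩ := exists_list_rec (fun l : List (Fin d → ℕ) => fun r : Fin d =>
    if Hits (fun j => A (l.take (j + 1))) (E r) l.length then 1 else 0)
  refine ⟨v, fun i r => ?_⟩
  rw [hv i]
  simp only [List.length_map, List.length_range]
  have := hits_congr (f := fun j => A (((List.range i).map v).take (j + 1)))
    (g := algAssign d A v) (i := i) (fun k hk => by
      simp only [algAssign]
      rw [← List.map_take, List.take_range, min_eq_left (by omega)]) (E r)
  simp only [this]

/-- Any bin with at least two items contains both colours. -/
lemma exists_both_colours (f : ℕ → ℕ) (i b : ℕ)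
    (h : 2 ≤ ((Finset.range i).filter (fun j => f j = b)).card) :
    ∃ j k, j < i ∧ k < i ∧ f j = b ∧ f k = b ∧ Coloured f j ∧ ¬ Coloured f k := by
  set S := (Finset.range i).filter (fun j => f j = b) with hS
  have hne : (S.erase 0).Nonempty := by
    rw [← Finset.card_pos]
    have := Finset.pred_card_le_card_erase (s := S) (a := 0)
    omega
  set j := (S.erase 0).min' hne with hj
  have hjm : j ∈ S.erase 0 := Finset.min'_mem _ _
  have hjS := Finset.mem_of_mem_erase hjm
  have hj0 := Finset.ne_of_mem_erase hjm
  have hjS' := hjS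
  simp only [hS, Finset.mem_filter, Finset.mem_range] at hjS'
  have hmin : ∀ k ∈ S, k ≠ 0 → j ≤ k := fun k hk hk0 =>
    Finset.min'_le _ _ (Finset.mem_erase.2 ⟨hk0, hk⟩)
  obtain ⟨k, hk, hkj⟩ := Finset.exists_mem_ne (by omega : 1 < S.card) j
  have hk' := hk
  simp only [hS, Finset.mem_filter, Finset.mem_range] at hk'
  refine ⟨j, k, hjS'.1, hk'.1, hjS'.2, hk'.2, ⟨hj0, fun l hl0 hlj hfl => ?_⟩, fun hc => ?_⟩
  · have : l ∈ S := by
      simp only [hS, Finset.mem_filter, Finset.mem_range]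
      exact ⟨by omega, hfl.trans hjS'.2⟩
    have := hmin l this (by omega)
    omega
  · have := hmin k hk hc.1
    exact hc.2 j (by omega) (by omega) (hjS'.2.trans hk'.2.symm)

open Classical in
/-- A bin of the algorithm that holds `B` items is full: with the next item `i` it would overflow
the coordinate of its `B` items and `i`. -/
lemma card_bin_le {d B N : ℕ} (hB : 2 ≤ B) {A : List (Fin d → ℕ) → ℕ} (hA : ValidAlg d B A)
    {E : Fin d → Finset ℕ}
    (hE : ∀ e ⊆ Finset.range N, e.card = B + 1 → ∃ r, E r = e)
    {v : ℕ → Fin d → ℕ} (hv1 : ∀ i r, v i r ≤ 1)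
    (hv : ∀ i r, v i r = if Hits (algAssign d A v) (E r) i then 1 else 0) (b : ℕ) :
    ∀ i ≤ N, ((Finset.range i).filter (fun j => algAssign d A v j = b)).card ≤ B := by
  intro i
  induction i with
  | zero => simp
  | succ i ih =>
    intro hi
    have ih := ih (by omega)
    rw [Finset.range_add_one, Finset.filter_insert]
    split_ifs with hib
    swap
    · exact ih
    by_contra hcon
    set S := (Finset.range i).filter (fun j => algAssign d A v j = b) with hS
    have hiS : i ∉ S := by simp [hS]
    rw [Finset.card_insert_of_notMem hiS] at hcon
    have hSc : S.card = B := by omega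
    have hSmem : ∀ j, j ∈ S ↔ j < i ∧ algAssign d A v j = b := by simp [hS]
    have hsub : insert i S ⊆ Finset.range (i + 1) := by
      intro j hj
      rcases Finset.mem_insert.1 hj with h | h
      · simp [h]
      · have := (hSmem j).1 h
        simp only [Finset.mem_range]
        omega
    obtain ⟨r, hr⟩ := hE (insert i S)
      (hsub.trans (Finset.range_subset_range.2 hi))
      (by rw [Finset.card_insert_of_notMem hiS, hSc])
    have hone : ∀ j ∈ insert i S, (if algAssign d A v j = b then v j r else 0) = 1 := by
      intro j hj
      have hjb : algAssign d A v j = b := by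
        rcases Finset.mem_insert.1 hj with h | h
        · rw [h, hib]
        · exact ((hSmem j).1 h).2
      rw [if_pos hjb, hv, hr, if_pos]
      refine ⟨hj, fun hmax => ?_⟩
      have hij := hmax i (Finset.mem_insert_self _ _)
      obtain ⟨p, q, hp, hq, hpb, hqb, hc1, hc2⟩ :=
        exists_both_colours (algAssign d A v) i b (by rw [← hSc, hS] at hB; convert hB)
      exact ⟨p, Finset.mem_insert_of_mem ((hSmem p).2 ⟨hp, hpb⟩), q,
        Finset.mem_insert_of_mem ((hSmem q).2 ⟨hq, hqb⟩), by omega, by omega, hc1, hc2⟩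
    have hle := hA (i + 1) v hv1 b r
    have hge := Finset.sum_le_sum_of_subset (f := fun j => if algAssign d A v j = b then v j r else 0)
      hsub
    rw [Finset.sum_congr rfl hone, Finset.sum_const, Finset.card_insert_of_notMem hiS, hSc] at hge
    simp only [smul_eq_mul, mul_one] at hge
    omega

open Classical in
lemma opt_eq_two {d B N : ℕ} (hB : 2 ≤ B) (hN : B + 1 ≤ N) {f : ℕ → ℕ}
    {E : Fin d → Finset ℕ} (hEc : ∀ r, (E r).card = B + 1)
    (hE : ∀ e ⊆ Finset.range N, e.card = B + 1 → ∃ r, E r = e)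
    {v : ℕ → Fin d → ℕ} (hv : ∀ i r, v i r = if Hits f (E r) i then 1 else 0) :
    vbpOPT d B N v = 2 := by
  unfold vbpOPT
  apply le_antisymm
  · apply Nat.sInf_le
    refine ⟨fun i => if Coloured f i then 1 else 0, fun i _ => by dsimp only; split_ifs <;> omega,
      fun c r => ?_⟩
    have hsum : (∑ i ∈ Finset.range N,
        if (if Coloured f i then 1 else 0) = c then v i r else 0) =
        ((Finset.range N).filter
          (fun i => (if Coloured f i then 1 else 0) = c ∧ Hits f (E r) i)).card := by
      rw [Finset.card_filter]
      refine Finset.sum_congr rfl fun i _ => ?_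
      rw [hv, ite_and]
    rw [hsum]
    set T := (Finset.range N).filter
          (fun i => (if Coloured f i then 1 else 0) = c ∧ Hits f (E r) i) with hT
    by_contra hcon
    have hTmem : ∀ i ∈ T, (if Coloured f i then 1 else 0) = c ∧ Hits f (E r) i :=
      fun i hi => (Finset.mem_filter.1 hi).2
    have hTE : T = E r := Finset.eq_of_subset_of_card_le
      (fun i hi => (hTmem i hi).2.1) (by rw [hEc]; omega)
    have hne : (E r).Nonempty := by
      rw [← Finset.card_pos, hEc]
      omega
    obtain ⟨j, hj, k, hk, -, -, hc1, hc2⟩ :=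
      (hTmem _ (hTE.symm.subset ((E r).max'_mem hne))).2.2 (fun j hj => Finset.le_max' _ _ hj)
    have h1 := (hTmem j (hTE.symm.subset hj)).1
    have h2 := (hTmem k (hTE.symm.subset hk)).1
    rw [if_pos hc1] at h1
    rw [if_neg hc2] at h2
    omega
  · apply le_csInf
    -- one bin per item is feasible, so the set is nonempty
    · refine ⟨N, id, fun i hi => hi, fun j r => ?_⟩
      have : ∀ i, v i r ≤ 1 := fun i => by rw [hv]; split_ifs <;> omega
      simp only [id, Finset.sum_ite_eq']
      split_ifs
      · have := this j
        omega
      · omega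
    · rintro m ⟨g, hg, hfeas⟩
      by_contra hm
      obtain ⟨r, hr⟩ := hE (Finset.range (B + 1)) (Finset.range_subset_range.2 hN) (by simp)
      have hle := hfeas 0 r
      have hge := Finset.sum_le_sum_of_subset (f := fun i => if g i = 0 then v i r else 0)
        (Finset.range_subset_range.2 hN)
      have hone : ∀ i ∈ Finset.range (B + 1), (if g i = 0 then v i r else 0) = 1 := by
        intro i hi
        have hi' := Finset.mem_range.1 hi
        have := hg i (by omega)
        rw [if_pos (by omega), hv, hr, if_pos]
        refine ⟨hi, fun hmax => ?_⟩
        have := hmax B (by simp)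
        exact ⟨1, by simp; omega, 0, by simp, by omega, by omega,
          ⟨one_ne_zero, fun k _ _ => by omega⟩, fun h => h.1 rfl⟩
      rw [Finset.sum_congr rfl hone] at hge
      simp only [Finset.sum_const, Finset.card_range, smul_eq_mul, mul_one] at hge
      omega

lemma lt_choose (B t : ℕ) : t < (B + 1 + t).choose (B + 1) := by
  induction t with
  | zero => simp
  | succ t ih =>
    rw [← add_assoc, Nat.choose_succ_succ']
    have : 0 < (B + 1 + t).choose B := Nat.choose_pos (by omega)
    omega

/-- The number of items used by the adversary. -/
lemma exists_item_count (B d : ℕ) (hd : 1 ≤ d) :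
    ∃ N, B + 1 ≤ N ∧ N.choose (B + 1) ≤ d ∧ d < (N + 1).choose (B + 1) := by
  classical
  have hex : ∃ M : ℕ, d < M.choose (B + 1) := ⟨_, lt_choose B d⟩
  have hspec := Nat.find_spec hex
  obtain ⟨N, hN⟩ : ∃ N, Nat.find hex = N + 1 := by
    refine Nat.exists_eq_succ_of_ne_zero fun h0 => ?_
    rw [h0] at hspec
    simp at hspec
  rw [hN] at hspec
  refine ⟨N, ?_, ?_, hspec⟩
  · by_contra hlt
    have : (N + 1).choose (B + 1) ≤ (B + 1).choose (B + 1) :=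
      Nat.choose_le_choose _ (by omega)
    rw [Nat.choose_self] at this
    omega
  · exact not_lt.1 (Nat.find_min hex (m := N) (by omega))

/-- An indexing of the `(B+1)`-subsets of the items by the coordinates; repetitions are harmless. -/
lemma exists_coordinates {B d N : ℕ} (hN : B + 1 ≤ N) (hd : N.choose (B + 1) ≤ d) :
    ∃ E : Fin d → Finset ℕ, (∀ r, (E r).card = B + 1) ∧
      ∀ e ⊆ Finset.range N, e.card = B + 1 → ∃ r, E r = e := by
  classical
  let P := Finset.powersetCard (B + 1) (Finset.range N)
  have hcard : Fintype.card P ≤ Fintype.card (Fin d) := by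
    simpa [P] using hd
  obtain ⟨φ⟩ := Function.Embedding.nonempty_of_card_le hcard
  have : Nonempty P := ⟨⟨Finset.range (B + 1),
    Finset.mem_powersetCard.2 ⟨Finset.range_subset_range.2 hN, by simp⟩⟩⟩
  refine ⟨fun r => (Function.invFun φ r).1,
    fun r => (Finset.mem_powersetCard.1 (Function.invFun φ r).2).2, fun e he hec => ?_⟩
  refine ⟨φ ⟨e, Finset.mem_powersetCard.2 ⟨he, hec⟩⟩, ?_⟩
  exact congrArg Subtype.val (Function.leftInverse_invFun φ.injective _)

lemma bound_lt {B d N m : ℕ} (hB : 2 ≤ B) (hd : d < (N + 1).choose (B + 1)) (hm : N ≤ B * m) :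
    (((Nat.factorial (B + 1) * d : ℝ)) ^ ((1 : ℝ) / (B + 1)) - 1) / (2 * B) < (m : ℝ) / 2 := by
  have h1 : Nat.factorial (B + 1) * d < (N + 1) ^ (B + 1) :=
    calc Nat.factorial (B + 1) * d
        < Nat.factorial (B + 1) * (N + 1).choose (B + 1) :=
          Nat.mul_lt_mul_of_pos_left hd (Nat.factorial_pos _)
      _ = (N + 1).descFactorial (B + 1) := (Nat.descFactorial_eq_factorial_mul_choose _ _).symm
      _ ≤ (N + 1) ^ (B + 1) := Nat.descFactorial_le_pow _ _
  have h2 : (Nat.factorial (B + 1) * d : ℝ) < ((N : ℝ) + 1) ^ (B + 1) := by exact_mod_cast h1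
  have h3 : (Nat.factorial (B + 1) * d : ℝ) ^ ((1 : ℝ) / (B + 1)) < (N : ℝ) + 1 := by
    have := Real.rpow_lt_rpow (z := (1 : ℝ) / (B + 1)) (by positivity) h2 (by positivity)
    have h4 := Real.pow_rpow_inv_natCast (x := (N : ℝ) + 1) (n := B + 1) (by positivity) (by omega)
    rw [one_div] at this ⊢
    push_cast at h4
    rwa [h4] at this
  have hm' : (N : ℝ) ≤ B * m := by exact_mod_cast hm
  have hB' : (0 : ℝ) < B := by exact_mod_cast (by omega : 0 < B)
  rw [div_lt_div_iff₀ (by positivity) (by norm_num)]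
  nlinarith

/-- For every B ≥ 2 and all large enough d, every valid deterministic online algorithm for
{0,1} d-dimensional VBP with bin size B has, on some instance with OPT = 2,
ratio > (((B+1)!·d)^{1/(B+1)} − 1)/(2B). -/
theorem online_lower_bound_B_ge_two (B : ℕ) (hB : 2 ≤ B) :
    ∃ d₀ : ℕ, ∀ d : ℕ, d₀ ≤ d → ∀ A : List (Fin d → ℕ) → ℕ, ValidAlg d B A →
      ∃ n : ℕ, ∃ v : ℕ → Fin d → ℕ, (∀ i, ∀ r : Fin d, v i r ≤ 1) ∧
        vbpOPT d B n v = 2 ∧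
        (((Nat.factorial (B + 1) * d : ℝ)) ^ ((1 : ℝ) / (B + 1)) - 1) / (2 * B)
          < (algBins d n A v : ℝ) / (vbpOPT d B n v : ℝ) := by
  classical
  refine ⟨1, fun d hd A hA => ?_⟩
  obtain ⟨N, hN, hNd, hdN⟩ := exists_item_count B d hd
  obtain ⟨E, hEc, hE⟩ := exists_coordinates hN hNd
  obtain ⟨v, hv⟩ := exists_adversary_s7 d A E
  have hv1 : ∀ i, ∀ r : Fin d, v i r ≤ 1 := fun i r => by rw [hv]; split_ifs <;> omega
  have hopt : vbpOPT d B N v = 2 := opt_eq_two hB hN hEc hE hv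
  have hbins : N ≤ B * algBins d N A v := by
    have := Finset.card_le_mul_card_image (f := algAssign d A v) (Finset.range N) B
      (fun b _ => card_bin_le hB hA hE hv1 hv b N le_rfl)
    simpa [algBins] using this
  refine ⟨N, v, hv1, hopt, ?_⟩
  rw [hopt]
  exact_mod_cast bound_lt hB hdN hbins
end

section
/- Let H be a k-uniform hypergraph (k ≥ 2) on vertex set V = {0,1,…,n−1} with edge set E, and let I_H be its online incidence matrix. Then the chromatic number χ(H) (the minimum number of parts in a partition of V such that no part contains an edge of E) equals the minimum number of parts in a partition of V into sets S satisfying Σ_{v∈S} I_H(e, v) ≤ k − 1 for every k-element subset e, i.e., χ(H) equals the optimal number of bins for packing the columns of I_H with bin size B = k − 1. -/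
/-!
A set `S` of columns is a feasible bin of size `k - 1` exactly when it contains no edge, so proper
colourings and feasible packings are the same partitions (`feasible_iff_no_edge`). The load of `S`
in row `e` is the number of nonzero entries of that row lying in `S`; the row is supported on the
`k` elements of `e`, so the bound `k - 1` fails only if every element of `e` lies in `S` and has
entry `1`. The maximum of `e` has entry `1` only when `e ∈ E`, so overload means `e ∈ E` and `e ⊆ S`.
-/

/-- Online incidence matrix of a hypergraph on `Fin n` with edge set `E`
(vertices arriving in the natural order): entry at row `e` (a k-element subset)
and column `v` is 1 iff `v ∈ e` and (`v` is not the maximum element of `e`, or `e ∈ E`). -/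
def onlineInc (n : ℕ) (E : Finset (Finset (Fin n))) (e : Finset (Fin n)) (v : Fin n) : ℕ :=
  if v ∈ e ∧ ((∃ u ∈ e, v < u) ∨ e ∈ E) then 1 else 0

theorem sum_onlineInc (n : ℕ) (E : Finset (Finset (Fin n))) (S e : Finset (Fin n)) :
    ∑ v ∈ S, onlineInc n E e v
      = (S.filter (fun v => v ∈ e ∧ ((∃ u ∈ e, v < u) ∨ e ∈ E))).card := by
  simp only [onlineInc, Finset.card_filter]

theorem feasible_iff_no_edge (n k : ℕ) (hk : 2 ≤ k) (E : Finset (Finset (Fin n)))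
    (hE : ∀ e ∈ E, e.card = k) (S : Finset (Fin n)) :
    (∀ e ∈ E, ¬ e ⊆ S) ↔
      ∀ e : Finset (Fin n), e.card = k → ∑ v ∈ S, onlineInc n E e v ≤ k - 1 := by
  constructor
  · intro h e he
    rw [sum_onlineInc]
    suffices hlt : (S.filter (fun v => v ∈ e ∧ ((∃ u ∈ e, v < u) ∨ e ∈ E))).card < e.card by
      omega
    apply Finset.card_lt_card
    refine ⟨fun v hv => (Finset.mem_filter.1 hv).2.1, fun hsub => ?_⟩
    by_cases heE : e ∈ E
    · exact h e heE fun v hv => (Finset.mem_filter.1 (hsub hv)).1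
    · have hne : e.Nonempty := Finset.card_pos.1 (by omega)
      -- The maximum of a non-edge has entry `0`.
      rcases (Finset.mem_filter.1 (hsub (e.max'_mem hne))).2.2 with ⟨u, hu, hlt⟩ | hmem
      · exact absurd (e.le_max' u hu) (not_le.2 hlt)
      · exact heE hmem
  · intro h e heE hsub
    have hle := h e (hE e heE)
    rw [sum_onlineInc] at hle
    have hsub' : e ⊆ S.filter (fun v => v ∈ e ∧ ((∃ u ∈ e, v < u) ∨ e ∈ E)) :=
      fun v hv => Finset.mem_filter.2 ⟨hsub hv, hv, Or.inr heE⟩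
    have hcard := Finset.card_le_card hsub'
    have := hE e heE
    omega

/-- The chromatic number of H equals the optimal number of bins for packing the columns
of the online incidence matrix with bin size B = k − 1. -/
theorem chromatic_eq_opt_bins (n k : ℕ) (hk : 2 ≤ k) (E : Finset (Finset (Fin n)))
    (hE : ∀ e ∈ E, e.card = k) :
    sInf {m | ∃ c : Fin n → ℕ, (∀ v, c v < m) ∧
        ∀ j, ∀ e ∈ E, ¬ e ⊆ Finset.univ.filter (fun v => c v = j)} =
      sInf {m | ∃ c : Fin n → ℕ, (∀ v, c v < m) ∧
        ∀ j, ∀ e : Finset (Fin n), e.card = k →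
          (∑ v ∈ Finset.univ.filter (fun v => c v = j), onlineInc n E e v) ≤ k - 1} := by
  simp only [feasible_iff_no_edge n k hk E hE]
end

section
/- Let H be a k-uniform hypergraph (k ≥ 2) on vertex set {0,1,…,n−1} with n ≥ k and edge set E, and let I'_H be its real-valued online incidence matrix. Then for every subset S of the vertex set, the following are equivalent: (i) for every (k−1)-element subset ε of the vertex set, Σ_{v∈S} I'_H(ε, v) ≤ k − 1; (ii) S contains no edge of E. -/
/-!
The row sum over `S` splits as `|S ∩ ε|` plus the contribution of `S \ ε`, in which every entry
is `0` or `1/n`.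

If an edge `e` lies in `S`, the row of `e` minus its last vertex has sum at least
`(k - 1) + 1/n`. Conversely, suppose `S` contains no edge. If `ε ⊆ S`, no `v ∈ S \ ε` can complete
`ε` to an edge, so the row sum is `|ε| = k - 1`. If `ε ⊄ S`, then `|S ∩ ε| ≤ k - 2`, and the
remaining at most `n` entries, each at most `1/n`, add at most `1`.
-/

/-- Real-valued online incidence matrix: rows indexed by (k−1)-element subsets ε,
columns by vertices v. Entry is 1 if v ∈ ε; 1/n if v ∉ ε, all elements of ε are
less than v, and ε ∪ {v} ∈ E; and 0 otherwise. -/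
noncomputable def onlineIncR (n : ℕ) (E : Finset (Finset (Fin n)))
    (ε : Finset (Fin n)) (v : Fin n) : ℝ :=
  if v ∈ ε then 1
  else if (∀ u ∈ ε, u < v) ∧ insert v ε ∈ E then 1 / (n : ℝ)
  else 0

lemma onlineIncR_nonneg (n : ℕ) (E : Finset (Finset (Fin n))) (ε : Finset (Fin n)) (v : Fin n) :
    0 ≤ onlineIncR n E ε v := by
  unfold onlineIncR
  split_ifs <;> positivity

lemma onlineIncR_le_of_notMem (n : ℕ) (E : Finset (Finset (Fin n))) (ε : Finset (Fin n))
    (v : Fin n) (hv : v ∉ ε) : onlineIncR n E ε v ≤ 1 / (n : ℝ) := by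
  unfold onlineIncR
  rw [if_neg hv]
  split_ifs
  · exact le_rfl
  · positivity

lemma sum_onlineIncR_eq (n : ℕ) (E : Finset (Finset (Fin n))) (ε S : Finset (Fin n)) :
    ∑ v ∈ S, onlineIncR n E ε v
      = ((S ∩ ε).card : ℝ) + ∑ v ∈ S \ ε, onlineIncR n E ε v := by
  rw [← Finset.sum_inter_add_sum_sdiff S ε]
  congr 1
  rw [Finset.card_eq_sum_ones, Nat.cast_sum]
  refine Finset.sum_congr rfl fun v hv => ?_
  simp [onlineIncR, (Finset.mem_inter.mp hv).2]

/-- A vertex set S has all row sums ≤ k−1 in the real-valued online incidence matrix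
iff S contains no edge of E. -/
theorem onlineIncR_feasible_iff (n k : ℕ) (hk : 2 ≤ k) (hn : k ≤ n)
    (E : Finset (Finset (Fin n))) (hE : ∀ e ∈ E, e.card = k) (S : Finset (Fin n)) :
    (∀ ε : Finset (Fin n), ε.card = k - 1 →
        (∑ v ∈ S, onlineIncR n E ε v) ≤ (k : ℝ) - 1) ↔
      ∀ e ∈ E, ¬ e ⊆ S := by
  have hn0 : (0 : ℝ) < n := by exact_mod_cast (by omega : 0 < n)
  constructor
  · intro h e he heS
    have hcard := hE e he
    have hne : e.Nonempty := Finset.card_pos.mp (by omega)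
    set m := e.max' hne with hm
    have hme : m ∈ e := Finset.max'_mem e hne
    have hsub : e.erase m ⊆ S := (Finset.erase_subset m e).trans heS
    have hc : (e.erase m).card = k - 1 := by rw [Finset.card_erase_of_mem hme, hcard]
    have hrow := h (e.erase m) hc
    rw [sum_onlineIncR_eq, Finset.inter_eq_right.mpr hsub, hc, Nat.cast_sub (by omega),
      Nat.cast_one] at hrow
    have hmS : m ∈ S \ e.erase m := by simp [heS hme]
    have hle := Finset.single_le_sum
      (fun v _ => onlineIncR_nonneg n E (e.erase m) v) hmS
    have hval : onlineIncR n E (e.erase m) m = 1 / (n : ℝ) := by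
      unfold onlineIncR
      rw [if_neg (Finset.notMem_erase m e), if_pos]
      refine ⟨fun u hu => ?_, by rwa [Finset.insert_erase hme]⟩
      exact lt_of_le_of_ne (e.le_max' u (Finset.mem_of_mem_erase hu)) (Finset.ne_of_mem_erase hu)
    have hpos : 0 < 1 / (n : ℝ) := by positivity
    linarith
  · intro h ε hε
    rw [sum_onlineIncR_eq]
    by_cases hsub : ε ⊆ S
    · have hzero : ∑ v ∈ S \ ε, onlineIncR n E ε v = 0 := by
        refine Finset.sum_eq_zero fun v hv => ?_
        obtain ⟨hvS, hvε⟩ := Finset.mem_sdiff.mp hv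
        unfold onlineIncR
        rw [if_neg hvε, if_neg]
        rintro ⟨-, hedge⟩
        exact h _ hedge (Finset.insert_subset hvS hsub)
      rw [hzero, Finset.inter_eq_right.mpr hsub, hε, Nat.cast_sub (by omega)]
      simp
    · have hlt : (S ∩ ε).card < ε.card := by
        refine Finset.card_lt_card (Finset.inter_subset_right.ssubset_of_ne fun heq => ?_)
        exact hsub (Finset.inter_eq_right.mp heq)
      have hinter : ((S ∩ ε).card : ℝ) + 2 ≤ k := by
        exact_mod_cast (by omega : (S ∩ ε).card + 2 ≤ k)
      have hrest : ∑ v ∈ S \ ε, onlineIncR n E ε v ≤ 1 := by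
        calc ∑ v ∈ S \ ε, onlineIncR n E ε v
            ≤ (S \ ε).card • (1 / (n : ℝ)) := Finset.sum_le_card_nsmul _ _ _ fun v hv =>
              onlineIncR_le_of_notMem n E ε v (Finset.mem_sdiff.mp hv).2
          _ ≤ 1 := by
              have hcn : ((S \ ε).card : ℝ) ≤ n := by
                exact_mod_cast (Finset.card_le_univ (S \ ε)).trans (Fintype.card_fin n).le
              rw [nsmul_eq_mul, mul_one_div]
              exact (div_le_one hn0).mpr hcn
      linarith
end

section
/- For every positive integer d there exists an instance I of [0,1] d-dimensional vector bin packing with bin size B = 1 such that OPT(I) = 2 and FF(I) ≥ d/2; in particular the competitive ratio of first-fit is at least d/4. -/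
/-!
Index items and coordinates from `0`, and group the items into pairs `{2j, 2j+1}`. Coordinate `r`
is filled completely by item `r`, and every item of the opposite parity in a later pair has a
small positive entry `1 / (d + 3)` there; all other entries are `0` (`badItem`).

* Putting even items in one bin and odd items in the other is feasible: in coordinate `r`, the
  class with the parity of `r` contributes only the entry `1` of item `r`, and the other class
  consists of at most `d + 3` small entries. One bin does not suffice, as items `0` and `3` overflow
  coordinate `0` (`badItem_opt`).
* First-fit puts each pair in a bin of its own. The two items of a pair fit together, while an item
  `t` of a later pair is blocked from the bin of pair `j` by the coordinate `2j` or `2j + 1` of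
  parity opposite to `t`. Hence item `t < d` lands in bin `t / 2 + 1` (`firstFitR_badItem`), and
  item `d - 1` shows that at least `d / 2` bins are opened.
-/

/-- First-fit assignment for [0,1] d-dimensional vector bin packing with real bin size B. -/
noncomputable def firstFitR (d : ℕ) (B : ℝ) (v : ℕ → Fin d → ℝ) : ℕ → ℕ
  | i => sInf {j | 1 ≤ j ∧ ∀ r : Fin d,
      (∑ i' ∈ (Finset.range i).attach,
        if firstFitR d B v i'.1 = j then v i'.1 r else 0) + v i r ≤ B}
termination_by i => i
decreasing_by exact Finset.mem_range.mp i'.2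

/-- Number of bins used by first-fit on the real-valued instance `v 0, …, v (n-1)`. -/
noncomputable def ffBinsR (d : ℕ) (B : ℝ) (n : ℕ) (v : ℕ → Fin d → ℝ) : ℕ :=
  Finset.sup (Finset.range n) (firstFitR d B v)

/-- Optimal number of bins for the real-valued instance. -/
noncomputable def vbpOPTR (d : ℕ) (B : ℝ) (n : ℕ) (v : ℕ → Fin d → ℝ) : ℕ :=
  sInf {m | ∃ f : ℕ → ℕ, (∀ i < n, f i < m) ∧
    ∀ j, ∀ r : Fin d, (∑ i ∈ Finset.range n, if f i = j then v i r else 0) ≤ B}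

/-- Entry `r` of the `t`-th item of the bad instance. The formula makes sense for all `t`; only the
items `t < d + 3` are used. -/
noncomputable def badItem (d t : ℕ) (r : Fin d) : ℝ :=
  if t = r then 1 else if (r : ℕ) / 2 < t / 2 ∧ t % 2 ≠ (r : ℕ) % 2 then 1 / ((d : ℝ) + 3) else 0

lemma badItem_small_pos (d : ℕ) : 0 < 1 / ((d : ℝ) + 3) := by positivity

lemma badItem_small_le (d : ℕ) : 1 / ((d : ℝ) + 3) ≤ 1 := by
  rw [div_le_one (by positivity)]
  have : (0 : ℝ) ≤ d := by positivity
  linarith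

lemma badItem_nonneg (d t : ℕ) (r : Fin d) : 0 ≤ badItem d t r := by
  have := badItem_small_pos d
  unfold badItem
  split_ifs <;> linarith

lemma badItem_le_one (d t : ℕ) (r : Fin d) : badItem d t r ≤ 1 := by
  have := badItem_small_le d
  unfold badItem
  split_ifs <;> linarith

lemma badItem_self (d t : ℕ) (r : Fin d) (h : t = r) : badItem d t r = 1 := by
  simp [badItem, h]

lemma badItem_eq_small (d t : ℕ) (r : Fin d) (h : (r : ℕ) / 2 < t / 2) (h' : t % 2 ≠ (r : ℕ) % 2) :
    badItem d t r = 1 / ((d : ℝ) + 3) := by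
  have : t ≠ r := by omega
  unfold badItem
  rw [if_neg this, if_pos ⟨h, h'⟩]

/-- The two items of a pair fit together in a bin. -/
lemma badItem_pair_le (d t : ℕ) (r : Fin d) (ht : t % 2 = 1) :
    badItem d (t - 1) r + badItem d t r ≤ 1 := by
  have := badItem_small_le d
  unfold badItem
  split_ifs <;> first | omega | linarith

lemma badItem_opt (d : ℕ) (hd : 1 ≤ d) : vbpOPTR d 1 (d + 3) (badItem d) = 2 := by
  unfold vbpOPTR
  apply le_antisymm
  · apply Nat.sInf_le
    refine ⟨fun i => i % 2, fun i _ => Nat.mod_lt _ (by norm_num), fun j r => ?_⟩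
    dsimp only
    by_cases hj : j = (r : ℕ) % 2
    · calc _ ≤ ∑ i ∈ Finset.range (d + 3), if i = (r : ℕ) then (1 : ℝ) else 0 := by
            apply Finset.sum_le_sum
            intro i _
            unfold badItem
            split_ifs <;> first | omega | norm_num
        _ ≤ 1 := by
            rw [Finset.sum_ite_eq']
            split_ifs <;> norm_num
    · calc _ ≤ ∑ i ∈ Finset.range (d + 3), 1 / ((d : ℝ) + 3) := by
            apply Finset.sum_le_sum
            intro i _
            have := badItem_small_pos d
            unfold badItem
            split_ifs <;> first | omega | linarith
        _ = 1 := by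
            rw [Finset.sum_const, Finset.card_range, nsmul_eq_mul]
            push_cast
            field_simp
  · apply le_csInf
    · -- With one bin per item every load is a single entry; this only shows nonemptiness.
      refine ⟨d + 3, id, fun i hi => hi, fun j r => ?_⟩
      simp only [id]
      rw [Finset.sum_ite_eq']
      split_ifs
      · exact badItem_le_one d j r
      · norm_num
    · rintro m ⟨f, hf, hsum⟩
      by_contra hm
      have hf0 : ∀ i < d + 3, f i = 0 := fun i hi => by have := hf i hi; omega
      have h := hsum 0 ⟨0, hd⟩
      have hle : ∑ i ∈ ({0, 3} : Finset ℕ), (if f i = 0 then badItem d i ⟨0, hd⟩ else 0) ≤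
          ∑ i ∈ Finset.range (d + 3), if f i = 0 then badItem d i ⟨0, hd⟩ else 0 := by
        apply Finset.sum_le_sum_of_subset_of_nonneg
        · intro i hi
          simp only [Finset.mem_insert, Finset.mem_singleton] at hi
          rw [Finset.mem_range]
          omega
        · intro i _ _
          split_ifs
          · exact badItem_nonneg _ _ _
          · exact le_rfl
      rw [Finset.sum_pair (by norm_num), if_pos (hf0 0 (by omega)), if_pos (hf0 3 (by omega)),
        badItem_self d 0 ⟨0, hd⟩ rfl, badItem_eq_small d 3 ⟨0, hd⟩ (by norm_num) (by norm_num)]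
        at hle
      linarith [badItem_small_pos d]

lemma firstFitR_badItem (d t : ℕ) (ht : t < d) : firstFitR d 1 (badItem d) t = t / 2 + 1 := by
  induction t using Nat.strong_induction_on with
  | _ t ih =>
  rw [firstFitR]
  have hload : ∀ j (r : Fin d), (∑ i' ∈ (Finset.range t).attach,
        if firstFitR d 1 (badItem d) i'.1 = j then badItem d i'.1 r else 0) =
      ∑ i ∈ Finset.range t, if i / 2 + 1 = j then badItem d i r else 0 := by
    intro j r
    rw [← Finset.sum_attach (Finset.range t)]
    apply Finset.sum_congr rfl
    intro i _
    have hi := Finset.mem_range.mp i.2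
    rw [ih i.1 hi (hi.trans ht)]
  simp only [hload]
  have hmem : t / 2 + 1 ∈ {j | 1 ≤ j ∧ ∀ r : Fin d,
      (∑ i ∈ Finset.range t, if i / 2 + 1 = j then badItem d i r else 0) + badItem d t r ≤ 1} := by
    refine ⟨by omega, fun r => ?_⟩
    by_cases hpar : t % 2 = 1
    · -- Only the partner `t - 1` precedes `t` in its bin.
      rw [Finset.sum_eq_single_of_mem (t - 1) (Finset.mem_range.mpr (by omega))]
      · rw [if_pos (by omega)]
        exact badItem_pair_le d t r hpar
      · intro i hi hne
        have := Finset.mem_range.mp hi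
        rw [if_neg (by omega)]
    · rw [Finset.sum_eq_zero, zero_add]
      · exact badItem_le_one d t r
      · intro i hi
        have := Finset.mem_range.mp hi
        rw [if_neg (by omega)]
  apply le_antisymm (Nat.sInf_le hmem)
  apply le_csInf ⟨_, hmem⟩
  rintro j ⟨hj, hfit⟩
  by_contra hlt
  -- The blocking coordinate: the member of pair `j - 1` with parity opposite to `t`.
  obtain ⟨s, hs⟩ : ∃ s, s = 2 * (j - 1) + (1 - t % 2) := ⟨_, rfl⟩
  have hst : s < t := by omega
  have h := hfit ⟨s, hst.trans ht⟩
  have hle := Finset.single_le_sum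
    (f := fun i => if i / 2 + 1 = j then badItem d i ⟨s, hst.trans ht⟩ else 0)
    (fun i _ => by
      split_ifs
      · exact badItem_nonneg _ _ _
      · exact le_rfl) (Finset.mem_range.mpr hst)
  rw [if_pos (by omega), badItem_self d s ⟨s, hst.trans ht⟩ rfl] at hle
  rw [badItem_eq_small d t ⟨s, hst.trans ht⟩ (by dsimp only; omega) (by dsimp only; omega)] at h
  linarith [badItem_small_pos d]

/-- For every positive d there is a [0,1] d-dimensional instance with bin size 1 on which
OPT = 2 and FF ≥ d/2; in particular first-fit's ratio is at least d/4. -/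
theorem exists_bad_real_instance_firstFit (d : ℕ) (hd : 1 ≤ d) :
    ∃ n : ℕ, 1 ≤ n ∧ ∃ v : ℕ → Fin d → ℝ, (∀ i, ∀ r : Fin d, 0 ≤ v i r ∧ v i r ≤ 1) ∧
      vbpOPTR d 1 n v = 2 ∧
      (d : ℝ) / 2 ≤ (ffBinsR d 1 n v : ℝ) ∧
      (d : ℝ) / 4 ≤ (ffBinsR d 1 n v : ℝ) / (vbpOPTR d 1 n v : ℝ) := by
  have hff : (d : ℝ) / 2 ≤ (ffBinsR d 1 (d + 3) (badItem d) : ℝ) := by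
    have h1 : firstFitR d 1 (badItem d) (d - 1) ≤ ffBinsR d 1 (d + 3) (badItem d) :=
      Finset.le_sup (f := firstFitR d 1 (badItem d)) (Finset.mem_range.mpr (by omega))
    rw [firstFitR_badItem d (d - 1) (by omega)] at h1
    have h2 : d ≤ 2 * ffBinsR d 1 (d + 3) (badItem d) := by omega
    have h3 : (d : ℝ) ≤ 2 * (ffBinsR d 1 (d + 3) (badItem d) : ℝ) := by exact_mod_cast h2
    linarith
  refine ⟨d + 3, by omega, badItem d, fun i r => ⟨badItem_nonneg d i r, badItem_le_one d i r⟩,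
    badItem_opt d hd, hff, ?_⟩
  rw [badItem_opt d hd]
  push_cast
  linarith
end

section
/- There exists d₀ such that for every d ≥ d₀ and every valid deterministic online algorithm A for [0,1] d-dimensional vector bin packing with bin size B = 1, there exists an instance I with OPT(I) ≤ log₂ d and A(I)/OPT(I) > 2d/(log₂ d)². -/
/-- The bin assigned to the i-th vector by an online algorithm `A` (which sees `v 0, …, v i`). -/
def algAssignR (d : ℕ) (A : List (Fin d → ℝ) → ℕ) (v : ℕ → Fin d → ℝ) (i : ℕ) : ℕ :=
  A ((List.range (i + 1)).map v)

/-- A deterministic online algorithm is valid if on every [0,1] input sequence every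
resulting bin is feasible (coordinate sums `≤ B`). -/
def ValidAlgR (d : ℕ) (B : ℝ) (A : List (Fin d → ℝ) → ℕ) : Prop :=
  ∀ n : ℕ, ∀ v : ℕ → Fin d → ℝ, (∀ i r, 0 ≤ v i r ∧ v i r ≤ 1) →
    ∀ j, ∀ r : Fin d,
      (∑ i ∈ Finset.range n, if algAssignR d A v i = j then v i r else 0) ≤ B

/-- Number of distinct bins used by `A` on the instance `v 0, …, v (n-1)`. -/
def algBinsR (d n : ℕ) (A : List (Fin d → ℝ) → ℕ) (v : ℕ → Fin d → ℝ) : ℕ :=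
  ((Finset.range n).image (algAssignR d A v)).card

/-- The vector of vertex `i` when the hidden colours are `f` and the palettes are `S`. Only the
colours of vertices before `i` and the palette of `i` itself enter. -/
noncomputable def adversaryVec (d : ℕ) (f : ℕ → ℕ) (S : ℕ → Finset ℕ) (i : ℕ) (r : Fin d) : ℝ :=
  if r.val = i then 1 else if r.val < i ∧ f r.val ∉ S i then 1 / ((d : ℝ) + 1) else 0

lemma adversaryVec_mem (d : ℕ) (f : ℕ → ℕ) (S : ℕ → Finset ℕ) (i : ℕ) (r : Fin d) :
    0 ≤ adversaryVec d f S i r ∧ adversaryVec d f S i r ≤ 1 := by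
  have h : (0 : ℝ) < (d : ℝ) + 1 := by positivity
  have h1 : 1 / ((d : ℝ) + 1) ≤ 1 := by
    rw [div_le_one h]
    linarith [(Nat.cast_nonneg d : (0 : ℝ) ≤ d)]
  have h0 : 0 ≤ 1 / ((d : ℝ) + 1) := by positivity
  unfold adversaryVec
  split_ifs <;> simp only [le_refl, zero_le_one, and_self, h0, h1]

lemma adversaryVec_congr (d : ℕ) {f f' : ℕ → ℕ} {S S' : ℕ → Finset ℕ} {i : ℕ}
    (hf : ∀ r < i, f r = f' r) (hS : S i = S' i) :
    adversaryVec d f S i = adversaryVec d f' S' i := by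
  funext r
  unfold adversaryVec
  by_cases hr : r.val < i
  · rw [hf _ hr, hS]
  · simp [hr]

lemma algAssignR_congr (d : ℕ) (A : List (Fin d → ℝ) → ℕ) {v w : ℕ → Fin d → ℝ} {i : ℕ}
    (h : ∀ j ≤ i, v j = w j) : algAssignR d A v i = algAssignR d A w i := by
  unfold algAssignR
  congr 1
  apply List.map_congr_left
  intro j hj
  exact h j (by have := List.mem_range.mp hj; omega)

/-- Hidden colours of the vertices before time `t` that lie in bin `b` of the assignment `a`. -/
def binColors (f a : ℕ → ℕ) (t b : ℕ) : Finset ℕ :=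
  ((Finset.range t).filter (fun i => a i = b)).image f

lemma exists_fresh_palette (m t : ℕ) (f a : ℕ → ℕ)
    (ht : t < m * m.centralBinom) :
    ∃ T ∈ (Finset.range (2 * m)).powersetCard m, ∀ b, binColors f a t b ≠ T := by
  by_contra! hcon
  set P := (Finset.range (2 * m)).powersetCard m with hP
  have hcard : P.card = m.centralBinom := by
    rw [hP, Finset.card_powersetCard, Finset.card_range, Nat.centralBinom]
  -- Each palette `T` is the colour set of the bins of at least `m` vertices.
  have hfib : ∀ T ∈ P, m ≤ ((Finset.range t).filter (fun i => binColors f a t (a i) = T)).card := by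
    intro T hT
    obtain ⟨b, hb⟩ := hcon T hT
    have h1 : T.card = m := (Finset.mem_powersetCard.mp hT).2
    calc m = (binColors f a t b).card := by rw [hb, h1]
      _ ≤ ((Finset.range t).filter (fun i => a i = b)).card := Finset.card_image_le
      _ ≤ _ := by
        apply Finset.card_le_card
        intro i hi
        rw [Finset.mem_filter] at hi ⊢
        exact ⟨hi.1, by rw [hi.2, hb]⟩
  have h2 : P.card * m ≤ ∑ T ∈ P,
      ((Finset.range t).filter (fun i => binColors f a t (a i) = T)).card := by
    simpa using Finset.card_nsmul_le_sum P _ m hfib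
  have h3 : ∑ T ∈ P, ((Finset.range t).filter (fun i => binColors f a t (a i) = T)).card
      ≤ t := by
    rw [← Finset.card_biUnion]
    · calc _ ≤ (Finset.range t).card := by
            apply Finset.card_le_card
            intro i hi
            obtain ⟨T, -, h⟩ := Finset.mem_biUnion.mp hi
            exact (Finset.mem_filter.mp h).1
        _ = t := Finset.card_range t
    · intro T _ T' _ hne
      rw [Function.onFun, Finset.disjoint_left]
      intro i hi hi'
      exact hne ((Finset.mem_filter.mp hi).2.symm.trans (Finset.mem_filter.mp hi').2)
  rw [hcard, mul_comm] at h2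
  omega

/-- Adjacent vertices cannot share a bin: the earlier vertex `i` fills coordinate `i` and the
later one adds `1 / (d + 1)` to it. -/
lemma color_mem_of_same_bin {d : ℕ} {A : List (Fin d → ℝ) → ℕ} (hA : ValidAlgR d 1 A)
    (f : ℕ → ℕ) (S : ℕ → Finset ℕ) {i t : ℕ} (hit : i < t) (htd : t ≤ d)
    (hb : algAssignR d A (adversaryVec d f S) i = algAssignR d A (adversaryVec d f S) t) :
    f i ∈ S t := by
  by_contra hn
  set v := adversaryVec d f S with hv
  have hmem := adversaryVec_mem d f S
  let r : Fin d := ⟨i, by omega⟩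
  have h := hA (t + 1) v hmem (algAssignR d A v t) r
  have hsub : ∑ j ∈ ({i, t} : Finset ℕ),
      (if algAssignR d A v j = algAssignR d A v t then v j r else 0) ≤
      ∑ j ∈ Finset.range (t + 1),
        (if algAssignR d A v j = algAssignR d A v t then v j r else 0) := by
    apply Finset.sum_le_sum_of_subset_of_nonneg
    · intro j hj
      simp only [Finset.mem_insert, Finset.mem_singleton] at hj
      rw [Finset.mem_range]
      omega
    · intro j _ _
      split_ifs
      · exact (hmem j r).1
      · exact le_rfl
  rw [Finset.sum_pair hit.ne, if_pos hb, if_pos rfl] at hsub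
  have h1 : v i r = 1 := by simp [hv, adversaryVec, r]
  have h2 : v t r = 1 / ((d : ℝ) + 1) := by
    simp [hv, adversaryVec, r, hit.ne, hit, hn]
  have h3 : 0 < 1 / ((d : ℝ) + 1) := by positivity
  rw [h1, h2] at hsub
  linarith

lemma adversary_exists {d m : ℕ} (hd : d < m * m.centralBinom)
    {A : List (Fin d → ℝ) → ℕ} (hA : ValidAlgR d 1 A) (t : ℕ) (ht : t ≤ d + 1) :
    ∃ (f : ℕ → ℕ) (S : ℕ → Finset ℕ),
      (∀ i < t, S i ∈ (Finset.range (2 * m)).powersetCard m ∧ f i ∈ S i) ∧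
      ∀ i j, i < j → j < t →
        algAssignR d A (adversaryVec d f S) i = algAssignR d A (adversaryVec d f S) j →
        f i ≠ f j := by
  induction t with
  | zero => exact ⟨fun _ => 0, fun _ => ∅, by simp, by simp⟩
  | succ t ih =>
    obtain ⟨f, S, hS, hinj⟩ := ih (by omega)
    obtain ⟨T, hT, hfresh⟩ := exists_fresh_palette m t f (algAssignR d A (adversaryVec d f S))
      (by omega)
    set S' := Function.update S t T with hS'
    have hS't : S' t = T := by simp [hS']
    have hS'i : ∀ i, i < t → S' i = S i := fun i hi => by simp [hS', hi.ne]
    have hold : ∀ i < t, algAssignR d A (adversaryVec d f S') i =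
        algAssignR d A (adversaryVec d f S) i := fun i hi =>
      algAssignR_congr d A fun j hj =>
        adversaryVec_congr d (fun _ _ => rfl) (hS'i j (by omega))
    set b := algAssignR d A (adversaryVec d f S') t with hb
    have hsub : binColors f (algAssignR d A (adversaryVec d f S)) t b ⊆ T := by
      intro c hc
      obtain ⟨i, hi, rfl⟩ := Finset.mem_image.mp hc
      rw [Finset.mem_filter, Finset.mem_range] at hi
      rw [← hS't]
      exact color_mem_of_same_bin hA f S' hi.1 (by omega) (by rw [hold i hi.1, hi.2])
    obtain ⟨c, hcT, hc⟩ := Finset.exists_of_ssubset (hsub.ssubset_of_ne (hfresh b))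
    set f' := Function.update f t c with hf'
    have hf't : f' t = c := by simp [hf']
    have hf'i : ∀ i, i < t → f' i = f i := fun i hi => by simp [hf', hi.ne]
    -- The colour of vertex `t` only influences later vectors.
    have hnew : ∀ i ≤ t, algAssignR d A (adversaryVec d f' S') i =
        algAssignR d A (adversaryVec d f S') i := fun i hi =>
      algAssignR_congr d A fun j hj =>
        adversaryVec_congr d (fun r hr => hf'i r (by omega)) rfl
    refine ⟨f', S', ?_, ?_⟩
    · intro i hi
      rcases Nat.lt_succ_iff_lt_or_eq.mp hi with h | rfl
      · rw [hS'i i h, hf'i i h]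
        exact hS i h
      · rw [hS't, hf't]
        exact ⟨hT, hcT⟩
    · intro i j hij hj heq
      rw [hnew i (by omega), hnew j (by omega), hold i (by omega)] at heq
      rw [hf'i i (by omega)]
      rcases Nat.lt_succ_iff_lt_or_eq.mp hj with h | rfl
      · rw [hold j h] at heq
        rw [hf'i j h]
        exact hinj i j hij h heq
      · rw [hf't]
        rintro rfl
        exact hc (Finset.mem_image.mpr
          ⟨i, Finset.mem_filter.mpr ⟨Finset.mem_range.mpr hij, heq⟩, rfl⟩)

/-- The hidden colour classes form a feasible packing. -/
lemma colorClass_feasible {d : ℕ} (f : ℕ → ℕ) (S : ℕ → Finset ℕ)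
    (hS : ∀ i < d + 1, f i ∈ S i) (j : ℕ) (r : Fin d) :
    (∑ i ∈ Finset.range (d + 1), if f i = j then adversaryVec d f S i r else 0) ≤ 1 := by
  have hpos : 0 ≤ 1 / ((d : ℝ) + 1) := by positivity
  by_cases hr : f r.val = j
  · -- Coordinate `r` belongs to a vertex of this class, so the others contribute nothing.
    calc _ ≤ ∑ i ∈ Finset.range (d + 1), (if i = r.val then (1 : ℝ) else 0) := by
          apply Finset.sum_le_sum
          intro i hi
          have hi' := hS i (Finset.mem_range.mp hi)
          by_cases hir : i = r.val
          · rw [if_pos hir]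
            split_ifs
            · exact (adversaryVec_mem d f S i r).2
            · exact zero_le_one
          · rw [if_neg hir]
            split_ifs with hij
            · have : f r.val ∈ S i := by rw [hr, ← hij]; exact hi'
              simp [adversaryVec, Ne.symm hir, this]
            · exact le_rfl
      _ ≤ 1 := by
          rw [Finset.sum_ite_eq']
          split_ifs <;> norm_num
  · calc _ ≤ ∑ i ∈ Finset.range (d + 1), 1 / ((d : ℝ) + 1) := by
          apply Finset.sum_le_sum
          intro i _
          split_ifs with hij
          · have hne : r.val ≠ i := fun h => hr (by rw [h, hij])
            unfold adversaryVec
            rw [if_neg hne]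
            split_ifs
            · exact le_rfl
            · exact hpos
          · exact hpos
      _ = 1 := by
          rw [Finset.sum_const, Finset.card_range, nsmul_eq_mul]
          push_cast
          field_simp

lemma opt_le_s14 {d k : ℕ} (f : ℕ → ℕ) (S : ℕ → Finset ℕ)
    (hS : ∀ i < d + 1, f i ∈ S i) (hk : ∀ i < d + 1, f i < k) :
    vbpOPTR d 1 (d + 1) (adversaryVec d f S) ≤ k ∧
      0 < vbpOPTR d 1 (d + 1) (adversaryVec d f S) := by
  have hmem : k ∈ {m | ∃ g : ℕ → ℕ, (∀ i < d + 1, g i < m) ∧ ∀ j, ∀ r : Fin d,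
      (∑ i ∈ Finset.range (d + 1), if g i = j then adversaryVec d f S i r else 0) ≤ (1 : ℝ)} :=
    ⟨f, hk, colorClass_feasible f S hS⟩
  refine ⟨Nat.sInf_le hmem, ?_⟩
  obtain ⟨g, hg, -⟩ := Nat.sInf_mem ⟨k, hmem⟩
  exact lt_of_le_of_lt (Nat.zero_le _) (hg 0 (Nat.succ_pos d))

/-- A bin holds at most `m` vertices: their colours are distinct and lie in the palette of the
last vertex of the bin. -/
lemma card_le_mul_bins {d m : ℕ} {A : List (Fin d → ℝ) → ℕ} (hA : ValidAlgR d 1 A)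
    (f : ℕ → ℕ) (S : ℕ → Finset ℕ)
    (hS : ∀ i < d + 1, (S i).card = m ∧ f i ∈ S i)
    (hinj : ∀ i j, i < j → j < d + 1 →
        algAssignR d A (adversaryVec d f S) i = algAssignR d A (adversaryVec d f S) j →
        f i ≠ f j) :
    d + 1 ≤ m * algBinsR d (d + 1) A (adversaryVec d f S) := by
  set a := algAssignR d A (adversaryVec d f S) with ha
  have key : (Finset.range (d + 1)).card ≤ m * ((Finset.range (d + 1)).image a).card := by
    apply Finset.card_le_mul_card_image
    intro b hb
    set F := (Finset.range (d + 1)).filter (fun i => a i = b) with hF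
    have hne : F.Nonempty := by
      obtain ⟨i, hi, hib⟩ := Finset.mem_image.mp hb
      exact ⟨i, Finset.mem_filter.mpr ⟨hi, hib⟩⟩
    have hl := F.max'_mem hne
    have hl' := Finset.mem_filter.mp hl
    have hlt := Finset.mem_range.mp hl'.1
    rw [← (hS _ hlt).1]
    refine Finset.card_le_card_of_injOn f ?_ ?_
    · intro i hi
      have hi' := Finset.mem_filter.mp (Finset.mem_coe.mp hi)
      rcases (F.le_max' i hi).lt_or_eq with h | h
      · exact color_mem_of_same_bin hA f S h (by omega) (hi'.2.trans hl'.2.symm)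
      · rw [← h]
        exact (hS i (Finset.mem_range.mp hi'.1)).2
    · intro i hi j hj hij
      have hi' := Finset.mem_filter.mp (Finset.mem_coe.mp hi)
      have hj' := Finset.mem_filter.mp (Finset.mem_coe.mp hj)
      rcases lt_trichotomy i j with h | h | h
      · exact absurd hij (hinj i j h (Finset.mem_range.mp hj'.1) (hi'.2.trans hj'.2.symm))
      · exact h
      · exact absurd hij.symm (hinj j i h (Finset.mem_range.mp hi'.1) (hj'.2.trans hi'.2.symm))
  rw [Finset.card_range] at key
  exact key

/-- The order `4 ^ m / √m` is needed: the weaker bound `4 ^ m ≤ 2 * m * centralBinom m` loses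
against the rounding of `log₂ d` to an even integer. -/
lemma sixteen_pow_le (m : ℕ) (hm : 1 ≤ m) : 16 ^ m ≤ 4 * m * m.centralBinom ^ 2 := by
  induction m, hm using Nat.le_induction with
  | base => decide
  | succ m hm ih =>
    have h := Nat.succ_mul_centralBinom_succ m
    have h2 : (m + 1) * 16 ^ (m + 1) ≤ (m + 1) * (4 * (m + 1) * (m + 1).centralBinom ^ 2) := by
      calc (m + 1) * 16 ^ (m + 1) = 16 * (m + 1) * 16 ^ m := by ring
        _ ≤ 16 * (m + 1) * (4 * m * m.centralBinom ^ 2) := Nat.mul_le_mul_left _ ih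
        _ ≤ 4 * (2 * (2 * m + 1) * m.centralBinom) ^ 2 := by
          nlinarith [Nat.zero_le (m.centralBinom ^ 2)]
        _ = 4 * ((m + 1) * (m + 1).centralBinom) ^ 2 := by rw [h]
        _ = _ := by ring
    exact Nat.le_of_mul_le_mul_left h2 (Nat.succ_pos m)

lemma four_pow_succ_lt (m : ℕ) (hm : 65 ≤ m) : 4 ^ (m + 1) < m * m.centralBinom := by
  have h := sixteen_pow_le m (by omega)
  have hc : 0 < (m : ℕ) * m.centralBinom ^ 2 :=
    Nat.mul_pos (by omega) (pow_pos m.centralBinom_pos 2)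
  refine lt_of_pow_lt_pow_left₀ 2 (Nat.zero_le _) ?_
  calc (4 ^ (m + 1)) ^ 2 = 16 * 16 ^ m := by
        rw [← pow_mul, mul_comm, pow_mul]; norm_num [pow_succ, mul_comm]
    _ ≤ 16 * (4 * m * m.centralBinom ^ 2) := Nat.mul_le_mul_left _ h
    _ = 64 * (m * m.centralBinom ^ 2) := by ring
    _ < m * (m * m.centralBinom ^ 2) := Nat.mul_lt_mul_of_pos_right (by omega) hc
    _ = (m * m.centralBinom) ^ 2 := by ring

/-- For all large enough d and every valid deterministic online algorithm for
[0,1] d-dimensional VBP with bin size 1, there is an instance with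
OPT ≤ log₂ d and ratio > 2d/(log₂ d)². -/
theorem online_lower_bound_real_B_one :
    ∃ d₀ : ℕ, ∀ d : ℕ, d₀ ≤ d → ∀ A : List (Fin d → ℝ) → ℕ, ValidAlgR d 1 A →
      ∃ n : ℕ, 1 ≤ n ∧ ∃ v : ℕ → Fin d → ℝ, (∀ i, ∀ r : Fin d, 0 ≤ v i r ∧ v i r ≤ 1) ∧
        (vbpOPTR d 1 n v : ℝ) ≤ Real.logb 2 d ∧
        2 * (d : ℝ) / (Real.logb 2 d) ^ 2
          < (algBinsR d n A v : ℝ) / (vbpOPTR d 1 n v : ℝ) := by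
  refine ⟨2 ^ 130, fun d hd A hA => ?_⟩
  have hd0 : d ≠ 0 := by
    have : 0 < 2 ^ 130 := by positivity
    omega
  obtain ⟨m, hm⟩ : ∃ m, m = Nat.log 2 d / 2 := ⟨_, rfl⟩
  have hlog : 130 ≤ Nat.log 2 d := Nat.le_log_of_pow_le (by norm_num) hd
  have hm65 : 65 ≤ m := by omega
  have hdm : d < m * m.centralBinom := by
    calc d < 2 ^ (Nat.log 2 d + 1) := Nat.lt_pow_succ_log_self (by norm_num) d
      _ ≤ 2 ^ (2 * (m + 1)) := Nat.pow_le_pow_right (by norm_num) (by omega)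
      _ = 4 ^ (m + 1) := by rw [pow_mul]; norm_num
      _ < _ := four_pow_succ_lt m hm65
  have hL : (2 * m : ℝ) ≤ Real.logb 2 d := by
    rw [Real.le_logb_iff_rpow_le (by norm_num) (by positivity)]
    have : 2 ^ (2 * m) ≤ d :=
      (Nat.pow_le_pow_right (by norm_num) (by omega)).trans (Nat.pow_log_le_self 2 hd0)
    have h2 : ((2 * m : ℝ)) = ((2 * m : ℕ) : ℝ) := by push_cast; ring
    rw [h2, Real.rpow_natCast]
    exact_mod_cast this
  obtain ⟨f, S, hS, hinj⟩ := adversary_exists hdm hA (d + 1) le_rfl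
  obtain ⟨hopt, hopt0⟩ := opt_le_s14 (k := 2 * m) f S (fun i hi => (hS i hi).2) (fun i hi =>
    Finset.mem_range.mp ((Finset.mem_powersetCard.mp (hS i hi).1).1 (hS i hi).2))
  have hbins := card_le_mul_bins hA f S
    (fun i hi => ⟨(Finset.mem_powersetCard.mp (hS i hi).1).2, (hS i hi).2⟩) hinj
  refine ⟨d + 1, by omega, adversaryVec d f S, adversaryVec_mem d f S, ?_, ?_⟩
  · refine le_trans ?_ hL
    exact_mod_cast hopt
  · set O := vbpOPTR d 1 (d + 1) (adversaryVec d f S)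
    set N := algBinsR d (d + 1) A (adversaryVec d f S)
    have hmR : (0 : ℝ) < m := by exact_mod_cast (by omega : 0 < m)
    have hOR : (0 : ℝ) < O := by exact_mod_cast hopt0
    have hO2 : (O : ℝ) ≤ 2 * m := by exact_mod_cast hopt
    have hN : (d : ℝ) + 1 ≤ m * N := by exact_mod_cast hbins
    calc 2 * (d : ℝ) / (Real.logb 2 d) ^ 2 ≤ 2 * (d : ℝ) / (2 * m) ^ 2 := by gcongr
      _ < (N : ℝ) / (2 * m) := by
        rw [div_lt_div_iff₀ (by positivity) (by positivity)]
        nlinarith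
      _ ≤ (N : ℝ) / O := by gcongr
end

section
/- For every integer B ≥ 2 there exists d₀ such that for every d ≥ d₀ and every valid deterministic online algorithm A for [0,1] d-dimensional vector bin packing with bin size B, there exists an instance I with OPT(I) = 2 and A(I)/OPT(I) > ((B! · d)^{1/B} − 1)/(2B). -/
/-- An adaptive adversary, whose `i`-th vector `F i c` depends only on the bins `c x` given to the
items `x < i`, produces an actual instance against the algorithm `A`. -/
lemma exists_adaptive_instance (d : ℕ) (A : List (Fin d → ℝ) → ℕ)
    (F : ℕ → (ℕ → ℕ) → Fin d → ℝ)
    (hF : ∀ i c c', (∀ x < i, c x = c' x) → F i c = F i c') :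
    ∃ v : ℕ → Fin d → ℝ, ∀ i, v i = F i (algAssignR d A v) := by
  let next : List (Fin d → ℝ) → Fin d → ℝ := fun L => F L.length (fun x => A (L.take (x + 1)))
  let hist : ℕ → List (Fin d → ℝ) := fun i => Nat.rec [] (fun _ L => L ++ [next L]) i
  have hsucc : ∀ i, hist (i + 1) = hist i ++ [next (hist i)] := fun i => rfl
  have hmap : ∀ i, hist i = (List.range i).map (fun k => next (hist k)) := by
    intro i
    induction i with
    | zero => rfl
    | succ k ih => rw [List.range_succ, List.map_append, ← ih, hsucc]; rfl
  refine ⟨fun i => next (hist i), fun i => ?_⟩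
  have hlen : (hist i).length = i := by rw [hmap]; simp
  change F (hist i).length _ = _
  rw [hlen]
  apply hF
  intro x hx
  simp only [algAssignR]
  rw [hmap i, ← List.map_take, List.take_range, min_eq_left (by omega)]

/-- The entry of item `i` in the coordinate labelled `S`, when the algorithm assigns item `x` to bin
`c x`. Labels of cardinality other than `B` (only `∅` occurs) stand for the coordinate that
forces two bins. -/
noncomputable def advEntry (B n : ℕ) (S : Finset ℕ) (i : ℕ) (c : ℕ → ℕ) : ℝ :=
  open Classical in
  if S.card ≠ B then (B : ℝ) / (n - 1)
  else if i ∈ S then 1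
  else if (∀ x ∈ S, x < i) ∧ ∃ k, ∀ x ∈ S, c x = k then 1 / (n : ℝ)
  else 0

lemma advEntry_congr (B n : ℕ) (S : Finset ℕ) (i : ℕ) (c c' : ℕ → ℕ)
    (h : ∀ x < i, c x = c' x) : advEntry B n S i c = advEntry B n S i c' := by
  have : ((∀ x ∈ S, x < i) ∧ ∃ k, ∀ x ∈ S, c x = k) ↔
      ((∀ x ∈ S, x < i) ∧ ∃ k, ∀ x ∈ S, c' x = k) := by
    refine and_congr_right fun hlt => exists_congr fun k => ?_
    exact forall₂_congr fun x hx => by rw [h x (hlt x hx)]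
  unfold advEntry
  classical
  exact if_congr Iff.rfl rfl (if_congr Iff.rfl rfl (if_congr this rfl rfl))

lemma advEntry_mem (B n : ℕ) (hn : B + 1 ≤ n) (S : Finset ℕ) (i : ℕ) (c : ℕ → ℕ) :
    0 ≤ advEntry B n S i c ∧ advEntry B n S i c ≤ 1 := by
  have h1 : (B : ℝ) + 1 ≤ n := by exact_mod_cast hn
  have hB0 : (0 : ℝ) ≤ B := Nat.cast_nonneg B
  have h3 : (B : ℝ) / (n - 1) ≤ 1 := div_le_one_of_le₀ (by linarith) (by linarith)
  have h4 : 0 ≤ (B : ℝ) / (n - 1) := div_nonneg hB0 (by linarith)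
  have h5 : 1 / (n : ℝ) ≤ 1 := div_le_one_of_le₀ (by linarith) (by linarith)
  have h6 : 0 ≤ 1 / (n : ℝ) := by positivity
  unfold advEntry
  split_ifs <;> constructor <;> first | assumption | norm_num

/-- `d` coordinates suffice to label every `B`-subset of `{0, …, n-1}`, plus the label `∅`. -/
lemma exists_labels (B n d : ℕ) (h : n.choose B < d) :
    ∃ g : Fin d → Finset ℕ,
      (∀ r, g r = ∅ ∨ g r ∈ Finset.powersetCard B (Finset.range n)) ∧
      (∃ r, g r = ∅) ∧ ∀ S ∈ Finset.powersetCard B (Finset.range n), ∃ r, g r = S := by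
  set T := Finset.powersetCard B (Finset.range n) with hT
  have hlen : T.toList.length = n.choose B := by simp [hT]
  refine ⟨fun r => T.toList.getD r ∅, fun r => ?_, ⟨⟨n.choose B, h⟩, ?_⟩, fun S hS => ?_⟩
  · by_cases hr : (r : ℕ) < T.toList.length
    · right
      simp only [List.getD_eq_getElem _ _ hr]
      exact Finset.mem_toList.1 (List.getElem_mem hr)
    · left
      exact List.getD_eq_default _ _ (by omega)
  · exact List.getD_eq_default _ _ (by simp [hlen])
  · obtain ⟨k, hk, hk'⟩ := List.getElem_of_mem (Finset.mem_toList.2 hS)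
    refine ⟨⟨k, by omega⟩, ?_⟩
    simp only [List.getD_eq_getElem _ _ hk, hk']

/-- If no bin overflows in any coordinate `S`, then every bin holds at most `B` items: given
`B + 1` items in a bin, take for `S` any `B` of them other than the last one. -/
lemma card_fiber_le (B n : ℕ) (hn : B + 1 ≤ n) (c : ℕ → ℕ)
    (hfeas : ∀ j, ∀ S ∈ Finset.powersetCard B (Finset.range n),
      (∑ i ∈ Finset.range n, if c i = j then advEntry B n S i c else 0) ≤ (B : ℝ)) (j : ℕ) :
    ((Finset.range n).filter (fun i => c i = j)).card ≤ B := by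
  by_contra! hcard
  set P := (Finset.range n).filter (fun i => c i = j) with hP
  have hne : P.Nonempty := Finset.card_pos.1 (by omega)
  set m := P.max' hne with hm
  have hmP : m ∈ P := P.max'_mem hne
  obtain ⟨S, hSP, hSc⟩ := Finset.exists_subset_card_eq
    (s := P.erase m) (n := B) (by rw [Finset.card_erase_of_mem hmP]; omega)
  have hSP' : S ⊆ P := hSP.trans (Finset.erase_subset _ _)
  have hmS : m ∉ S := fun h => Finset.notMem_erase m P (hSP h)
  have hlt : ∀ x ∈ S, x < m := fun x hx =>
    lt_of_le_of_ne (P.le_max' x (hSP' hx)) (Finset.ne_of_mem_erase (hSP hx))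
  have hcol : ∀ x ∈ P, c x = j := fun x hx => (Finset.mem_filter.1 hx).2
  have hsum := hfeas j S (Finset.mem_powersetCard.2
    ⟨hSP'.trans (Finset.filter_subset _ _), hSc⟩)
  rw [← Finset.sum_filter, ← hP] at hsum
  have hsub : insert m S ⊆ P := Finset.insert_subset hmP hSP'
  have hge := Finset.sum_le_sum_of_subset_of_nonneg (f := fun i => advEntry B n S i c) hsub
    (fun i _ _ => (advEntry_mem B n hn S i c).1)
  rw [Finset.sum_insert hmS] at hge
  have hone : ∑ i ∈ S, advEntry B n S i c = B := by
    rw [Finset.sum_congr rfl (g := fun _ => (1 : ℝ))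
      (fun i hi => by simp [advEntry, hSc, hi])]
    simp [hSc]
  have hmv : advEntry B n S m c = 1 / n := by
    have : (∀ x ∈ S, x < m) ∧ ∃ k, ∀ x ∈ S, c x = k :=
      ⟨hlt, j, fun x hx => hcol x (hSP' hx)⟩
    simp only [advEntry]
    rw [if_neg (by simp [hSc]), if_neg hmS, if_pos this]
  have hpos : (0 : ℝ) < 1 / n := by
    have : (0 : ℝ) < n := by exact_mod_cast (by omega : 0 < n)
    positivity
  linarith

/-- If the algorithm has at most `B` items in each bin, the items fit in two bins: one
for the first item of each of the algorithm's bins, the other for the rest. The last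
item `n - 1` is always put in the second bin, so that neither bin holds all items. -/
lemma two_bins_suffice (B n : ℕ) (hB : 2 ≤ B) (hn : B + 1 ≤ n) (c : ℕ → ℕ)
    (hfib : ∀ j, ((Finset.range n).filter (fun i => c i = j)).card ≤ B) :
    ∃ f : ℕ → ℕ, (∀ i < n, f i < 2) ∧ ∀ j, ∀ S,
      (S = ∅ ∨ S ∈ Finset.powersetCard B (Finset.range n)) →
      (∑ i ∈ Finset.range n, if f i = j then advEntry B n S i c else 0) ≤ (B : ℝ) := by
  classical
  have hnR : (B : ℝ) + 1 ≤ n := by exact_mod_cast hn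
  have hBR : (2 : ℝ) ≤ B := by exact_mod_cast hB
  let f : ℕ → ℕ := fun i => if (∃ x < i, c x = c i) ∨ i + 1 = n then 1 else 0
  refine ⟨f, fun i _ => by simp only [f]; split_ifs <;> omega, ?_⟩
  rintro j S (rfl | hS)
  · have hval : ∀ i, advEntry B n ∅ i c = (B : ℝ) / (n - 1) := by
      intro i
      simp only [advEntry]
      rw [if_pos (by simp; omega)]
    obtain ⟨s, hs, hsj⟩ : ∃ s ∈ Finset.range n, f s ≠ j := by
      have h0 : f 0 = 0 := by simp only [f]; rw [if_neg]; simp; omega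
      have h1 : f (n - 1) = 1 := by simp only [f]; rw [if_pos]; right; omega
      by_cases hj : j = 0
      · exact ⟨n - 1, by simp; omega, by omega⟩
      · exact ⟨0, by simp; omega, by omega⟩
    rw [← Finset.sum_filter, Finset.sum_congr rfl (fun i _ => hval i), Finset.sum_const,
      nsmul_eq_mul]
    have hcard : ((Finset.range n).filter (fun i => f i = j)).card ≤ n - 1 := by
      have hsub : (Finset.range n).filter (fun i => f i = j) ⊆ (Finset.range n).erase s := by
        intro i hi
        rw [Finset.mem_filter] at hi
        exact Finset.mem_erase.2 ⟨fun h => hsj (h ▸ hi.2), hi.1⟩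
      simpa [Finset.card_erase_of_mem hs] using Finset.card_le_card hsub
    have hcard' : (((Finset.range n).filter (fun i => f i = j)).card : ℝ) ≤ n - 1 := by
      have : ((n - 1 : ℕ) : ℝ) = n - 1 := by rw [Nat.cast_sub (by omega)]; simp
      rw [← this]; exact_mod_cast hcard
    rw [mul_div_assoc', div_le_iff₀ (by linarith), mul_comm]
    gcongr
  · obtain ⟨hSn, hSc⟩ := Finset.mem_powersetCard.1 hS
    by_cases hmono : ∃ k, ∀ x ∈ S, c x = k
    · obtain ⟨k, hk⟩ := hmono
      -- `S` is one of the algorithm's bins, so its minimum is the first item of that bin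
      have hSeq : S = (Finset.range n).filter (fun i => c i = k) :=
        Finset.eq_of_subset_of_card_le
          (fun x hx => Finset.mem_filter.2 ⟨hSn hx, hk x hx⟩) (by rw [hSc]; exact hfib k)
      have hne : S.Nonempty := Finset.card_pos.1 (by omega)
      set a := S.min' hne with ha
      have haS : a ∈ S := S.min'_mem hne
      obtain ⟨b, hbS, hab⟩ := Finset.exists_mem_ne (by omega : 1 < S.card) a
      have hlt : a < b := lt_of_le_of_ne (S.min'_le b hbS) (Ne.symm hab)
      have hbn : b < n := Finset.mem_range.1 (hSn hbS)
      have hfa : f a = 0 := by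
        simp only [f]
        rw [if_neg]
        rintro (⟨x, hx, hxa⟩ | h)
        · have hxS : x ∈ S := by
            rw [hSeq, Finset.mem_filter, Finset.mem_range]
            exact ⟨by omega, hxa.trans (hk a haS)⟩
          have := S.min'_le x hxS
          omega
        · omega
      have hfb : f b = 1 := by
        simp only [f]
        rw [if_pos]
        exact Or.inl ⟨a, hlt, (hk a haS).trans (hk b hbS).symm⟩
      obtain ⟨s, hs, hsj⟩ : ∃ s ∈ S, f s ≠ j := by
        by_cases hj : j = 0
        · exact ⟨b, hbS, by omega⟩
        · exact ⟨a, haS, by omega⟩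
      have hpos : (0 : ℝ) ≤ 1 / n := by positivity
      calc (∑ i ∈ Finset.range n, if f i = j then advEntry B n S i c else 0)
          ≤ ∑ i ∈ Finset.range n, ((if i ∈ S.erase s then (1 : ℝ) else 0) + 1 / n) := by
            apply Finset.sum_le_sum
            intro i _
            by_cases hij : f i = j
            · have his : i ≠ s := fun h => hsj (h ▸ hij)
              rw [if_pos hij]
              by_cases hiS : i ∈ S
              · rw [if_pos (Finset.mem_erase.2 ⟨his, hiS⟩)]
                linarith [(advEntry_mem B n hn S i c).2]
              · rw [if_neg (fun h => hiS (Finset.mem_of_mem_erase h))]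
                simp only [advEntry]
                rw [if_neg (by simp [hSc]), if_neg hiS]
                split_ifs <;> linarith
            · rw [if_neg hij]
              split_ifs <;> linarith
        _ = (((Finset.range n).filter (fun i => i ∈ S.erase s)).card : ℝ) + 1 := by
            rw [Finset.sum_add_distrib, Finset.sum_boole, Finset.sum_const, nsmul_eq_mul,
              Finset.card_range, mul_one_div_cancel (by linarith)]
        _ ≤ ((B - 1 : ℕ) : ℝ) + 1 := by
            have : ((Finset.range n).filter (fun i => i ∈ S.erase s)).card ≤ B - 1 := by
              rw [← hSc, ← Finset.card_erase_of_mem hs]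
              exact Finset.card_le_card fun i hi => (Finset.mem_filter.1 hi).2
            gcongr
        _ = B := by rw [Nat.cast_sub (by omega)]; simp
    · calc (∑ i ∈ Finset.range n, if f i = j then advEntry B n S i c else 0)
          ≤ ∑ i ∈ Finset.range n, (if i ∈ S then (1 : ℝ) else 0) := by
            apply Finset.sum_le_sum
            intro i _
            have : advEntry B n S i c = if i ∈ S then (1 : ℝ) else 0 := by
              simp only [advEntry]
              rw [if_neg (by simp [hSc]), if_neg (c := _ ∧ _) (fun h => hmono h.2)]
            rw [this]
            split_ifs <;> norm_num
        _ = (((Finset.range n).filter (fun i => i ∈ S)).card : ℝ) := by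
            rw [Finset.sum_boole]
        _ ≤ B := by
            rw [← hSc]
            exact_mod_cast Finset.card_le_card fun i hi => (Finset.mem_filter.1 hi).2

/-- The coordinate `∅` overflows if all items share a bin. -/
lemma one_bin_fails (B n : ℕ) (hB : 2 ≤ B) (hn : B + 1 ≤ n) (c f : ℕ → ℕ) (j : ℕ)
    (hf : ∀ i < n, f i = j) :
    (B : ℝ) < ∑ i ∈ Finset.range n, if f i = j then advEntry B n ∅ i c else 0 := by
  have hnR : (B : ℝ) + 1 ≤ n := by exact_mod_cast hn
  have hBR : (2 : ℝ) ≤ B := by exact_mod_cast hB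
  have hval : ∀ i ∈ Finset.range n,
      (if f i = j then advEntry B n ∅ i c else 0) = (B : ℝ) / (n - 1) := by
    intro i hi
    rw [if_pos (hf i (Finset.mem_range.1 hi))]
    simp only [advEntry]
    rw [if_pos (by simp; omega)]
  rw [Finset.sum_congr rfl hval, Finset.sum_const, Finset.card_range, nsmul_eq_mul,
    mul_div_assoc', lt_div_iff₀ (by linarith)]
  nlinarith

/-- The parameter `n = ⌊(B! d)^{1/B}⌋`: it is large, and `B`-subsets of `n` items are fewer than
the coordinates. -/
lemma exists_item_count_s15 (B d : ℕ) (hB : 2 ≤ B) (hd : (B + 1) ^ B ≤ d) :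
    ∃ n : ℕ, B + 1 ≤ n ∧ n.choose B < d ∧
      ((Nat.factorial B * d : ℝ)) ^ ((1 : ℝ) / B) - 1 < n := by
  have hy : (0 : ℝ) ≤ (Nat.factorial B * d : ℝ) := by positivity
  set x := ((Nat.factorial B * d : ℝ)) ^ ((1 : ℝ) / B) with hx
  have hx0 : 0 ≤ x := Real.rpow_nonneg hy _
  have hxB : x ^ B = (Nat.factorial B * d : ℝ) := by
    rw [hx, one_div, Real.rpow_inv_natCast_pow hy (by omega)]
  have hge : B + 1 ≤ ⌊x⌋₊ := by
    apply Nat.le_floor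
    apply le_of_pow_le_pow_left₀ (n := B) (by omega) hx0
    rw [hxB]
    have h1 : 1 ≤ B.factorial := Nat.factorial_pos B
    have : (B + 1) ^ B ≤ B.factorial * d := by nlinarith
    exact_mod_cast this
  refine ⟨⌊x⌋₊, hge, ?_, by linarith [Nat.lt_floor_add_one x]⟩
  have hpow : ⌊x⌋₊ ^ B ≤ B.factorial * d := by
    have : ((⌊x⌋₊ : ℝ)) ^ B ≤ (Nat.factorial B * d : ℝ) := by
      rw [← hxB]
      exact pow_le_pow_left₀ (by positivity) (Nat.floor_le hx0) B
    exact_mod_cast this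
  have hdesc : ⌊x⌋₊.descFactorial B < ⌊x⌋₊ ^ B := Nat.descFactorial_lt_pow (by omega) hB
  rw [Nat.descFactorial_eq_factorial_mul_choose] at hdesc
  exact lt_of_mul_lt_mul_left (hdesc.trans_le hpow) (Nat.zero_le _)

/-- For every integer B ≥ 2 and all large enough d, every valid deterministic online
algorithm for [0,1] d-dimensional VBP with bin size B has, on some instance with OPT = 2,
ratio > ((B!·d)^{1/B} − 1)/(2B). -/
theorem online_lower_bound_real_B_ge_two (B : ℕ) (hB : 2 ≤ B) :
    ∃ d₀ : ℕ, ∀ d : ℕ, d₀ ≤ d → ∀ A : List (Fin d → ℝ) → ℕ, ValidAlgR d (B : ℝ) A →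
      ∃ n : ℕ, ∃ v : ℕ → Fin d → ℝ, (∀ i, ∀ r : Fin d, 0 ≤ v i r ∧ v i r ≤ 1) ∧
        vbpOPTR d (B : ℝ) n v = 2 ∧
        (((Nat.factorial B * d : ℝ)) ^ ((1 : ℝ) / B) - 1) / (2 * B)
          < (algBinsR d n A v : ℝ) / (vbpOPTR d (B : ℝ) n v : ℝ) := by
  refine ⟨(B + 1) ^ B, fun d hd A hA => ?_⟩
  obtain ⟨n, hn, hchoose, hlt⟩ := exists_item_count_s15 B d hB hd
  obtain ⟨g, hg, ⟨r₀, hr₀⟩, hgS⟩ := exists_labels B n d hchoose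
  obtain ⟨v, hv⟩ := exists_adaptive_instance d A (fun i c r => advEntry B n (g r) i c)
    (fun i c c' h => funext fun r => advEntry_congr B n (g r) i c c' h)
  set c := algAssignR d A v with hc
  have hv' : ∀ i r, v i r = advEntry B n (g r) i c := fun i r => congrFun (hv i) r
  have hv01 : ∀ i, ∀ r : Fin d, 0 ≤ v i r ∧ v i r ≤ 1 := fun i r => by
    rw [hv']; exact advEntry_mem B n hn _ _ _
  have hfib := card_fiber_le B n hn c (fun j S hS => by
    obtain ⟨r, rfl⟩ := hgS S hS
    simpa only [hv'] using hA n v hv01 j r)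
  have hopt : vbpOPTR d (B : ℝ) n v = 2 := by
    apply le_antisymm
    · obtain ⟨f, hf2, hf⟩ := two_bins_suffice B n hB hn c hfib
      refine Nat.sInf_le ⟨f, hf2, fun j r => ?_⟩
      simpa only [hv'] using hf j (g r) (hg r)
    · obtain ⟨f₂, hf2, hf₂⟩ := two_bins_suffice B n hB hn c hfib
      -- the set is nonempty, so its infimum is not a junk value
      refine le_csInf ⟨2, f₂, hf2, fun j r => ?_⟩ ?_
      · simpa only [hv'] using hf₂ j (g r) (hg r)
      · rintro m ⟨f, hfm, hf⟩
        by_contra! hm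
        have hover := one_bin_fails B n hB hn c f 0 (fun i hi => by have := hfm i hi; omega)
        have := hf 0 r₀
        simp only [hv', hr₀] at this
        linarith
  refine ⟨n, v, hv01, hopt, ?_⟩
  have hbins : n ≤ B * algBinsR d n A v := by
    have := Finset.card_le_mul_card_image (f := c) (Finset.range n) B (fun j _ => hfib j)
    simpa [algBinsR] using this
  have hbins' : (n : ℝ) ≤ B * algBinsR d n A v := by exact_mod_cast hbins
  have hB0 : (0 : ℝ) < B := by exact_mod_cast (by omega : 0 < B)
  rw [hopt, div_lt_div_iff₀ (by positivity) (by norm_num)]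
  push_cast
  linarith
end

section
/- There exists d₀ such that for every d ≥ d₀ and every valid randomized online algorithm for {0,1} d-dimensional vector bin packing with bin size B = 1 (given by a finite probability space (Ω, μ) and a family (A_ω)_{ω∈Ω} of valid deterministic online algorithms), there exists an instance I with OPT(I) ≤ log₂(sqrt(2d) − 1) and E_{ω∼μ}[A_ω(I)]/OPT(I) > (sqrt(2d) − 1)/(16 (log₂(sqrt(2d) − 1))²). -/
namespace VBP

/-! ### Hues of bins and gains -/

/-- The gain `r / (r - h)` of a bin that receives a new colour while its hue has `h` elements. It
is `0` for `h ≥ r` (truncated subtraction and division by zero). -/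
noncomputable def weight (r h : ℕ) : ℝ := (r : ℝ) / ((r - h : ℕ) : ℝ)

/-- The hue of bin `b` after `n` items: the colours `c i` of the items `i < n` that the assignment
`f` places in `b`. -/
def hue (f c : ℕ → ℕ) (n b : ℕ) : Finset ℕ :=
  ((Finset.range n).filter (fun i => f i = b)).image c

open Classical in
/-- The gain of item `t`: zero if its colour already occurs in its bin, and the weight of the
current hue of that bin otherwise. -/
noncomputable def gain (r : ℕ) (f c : ℕ → ℕ) (t : ℕ) : ℝ :=
  if c t ∈ hue f c t (f t) then 0 else weight r (hue f c t (f t)).card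

lemma weight_nonneg (r h : ℕ) : 0 ≤ weight r h := by unfold weight; positivity

lemma sum_inv_le (r : ℕ) : ∑ i ∈ Finset.range r, (1 : ℝ) / (i + 1) ≤ 2 * √r := by
  induction r with
  | zero => simp
  | succ n ih =>
    rw [Finset.sum_range_succ]
    have h0 : (0 : ℝ) ≤ n := Nat.cast_nonneg n
    have ha := Real.sq_sqrt h0
    have hb := Real.sq_sqrt (show (0 : ℝ) ≤ n + 1 by linarith)
    have hb1 : 1 ≤ √((n : ℝ) + 1) := Real.one_le_sqrt.mpr (by linarith)
    have ha0 := Real.sqrt_nonneg (n : ℝ)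
    push_cast
    generalize √(n : ℝ) = a at *
    generalize √((n : ℝ) + 1) = b at *
    have : (1 : ℝ) / (n + 1) ≤ 2 * b - 2 * a := by
      rw [div_le_iff₀ (by linarith), ← hb]
      have h1 : (b - a) * (b + a) = 1 := by nlinarith
      have h2 : 0 < b - a := by nlinarith
      nlinarith [mul_nonneg h2.le (sub_nonneg.2 hb1), mul_nonneg h2.le (sub_nonneg.2 (show a ≤ b by linarith)), mul_nonneg (mul_nonneg h2.le (sub_nonneg.2 hb1)) (show 0 ≤ b by linarith)]
    linarith

lemma sum_weight_le (r h : ℕ) : ∑ i ∈ Finset.range h, weight r i ≤ 2 * r * √r := by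
  have h1 : ∑ i ∈ Finset.range h, weight r i ≤ ∑ i ∈ Finset.range r, weight r i := by
    rcases le_total h r with hr | hr
    · exact Finset.sum_le_sum_of_subset_of_nonneg (Finset.range_mono hr)
        (fun i _ _ => weight_nonneg r i)
    · refine (Finset.sum_subset (Finset.range_mono hr) ?_).ge
      intro i _ hi
      have : r - i = 0 := by simp at hi; omega
      simp [weight, this]
  have h2 : ∑ i ∈ Finset.range r, weight r i = r * ∑ i ∈ Finset.range r, (1 : ℝ) / (i + 1) := by
    rw [← Finset.sum_range_reflect, Finset.mul_sum]
    refine Finset.sum_congr rfl fun i hi => ?_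
    have : r - (r - 1 - i) = i + 1 := by simp at hi; omega
    simp [weight, this, div_eq_mul_inv]
  rw [h2] at h1
  have := mul_le_mul_of_nonneg_left (sum_inv_le r) (Nat.cast_nonneg (α := ℝ) r)
  linarith

lemma hue_succ (f c : ℕ → ℕ) (n b : ℕ) :
    hue f c (n + 1) b = if f n = b then insert (c n) (hue f c n b) else hue f c n b := by
  unfold hue
  rw [Finset.range_add_one, Finset.filter_insert]
  split_ifs <;> simp

/-- The gains of the items of one bin telescope, since each nonzero gain enlarges the hue by one. -/
lemma sum_gain_bin (r : ℕ) (f c : ℕ → ℕ) (n b : ℕ) :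
    ∑ t ∈ Finset.range n with f t = b, gain r f c t
      = ∑ i ∈ Finset.range (hue f c n b).card, weight r i := by
  induction n with
  | zero => simp [hue]
  | succ n ih =>
    rw [Finset.range_add_one, Finset.filter_insert, hue_succ]
    split_ifs with h
    · rw [Finset.sum_insert (by simp), ih]
      subst h
      unfold gain
      by_cases hc : c n ∈ hue f c n (f n)
      · simp [hc]
      · rw [if_neg hc, Finset.card_insert_of_notMem hc, Finset.sum_range_succ, add_comm]
    · exact ih

lemma sum_gain_le (r : ℕ) (f c : ℕ → ℕ) (n : ℕ) :
    ∑ t ∈ Finset.range n, gain r f c t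
      ≤ ((Finset.range n).image f).card * (2 * r * √r) := by
  rw [← Finset.sum_fiberwise_of_maps_to (t := (Finset.range n).image f) (g := f)
    (fun i hi => Finset.mem_image_of_mem f hi), ← nsmul_eq_mul]
  refine Finset.sum_le_card_nsmul _ _ _ fun b _ => ?_
  rw [sum_gain_bin]
  exact sum_weight_le _ _

/-! ### Distinct representatives of large total gain -/

/-- The representatives `g` are chosen to maximise the total gain. If `x ∈ S a` is free, moving `a`
to `x` shows `G a x ≤ G a (g a)`; if `x = g a'`, moving `a` to `x` and `a'` to a free element shows
`G a x ≤ G a (g a) + G a' (g a')`. Summation over all `x` and `a` gives the bound. -/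
lemma exists_assignment {s r : ℕ} (hs : s < r) (S : Fin s → Finset ℕ)
    (hS : ∀ a, (S a).card = r) (G : Fin s → ℕ → ℝ) (hG : ∀ a x, 0 ≤ G a x) :
    ∃ g : Fin s → ℕ, Function.Injective g ∧ (∀ a, g a ∈ S a) ∧
      ∑ a, ∑ x ∈ S a, G a x ≤ (r + s) * ∑ a, G a (g a) := by
  classical
  have hne : ((Fintype.piFinset S).filter Function.Injective).Nonempty := by
    obtain ⟨g, hg, hg'⟩ := (Finset.all_card_le_biUnion_card_iff_exists_injective S).1 (by
      intro I
      rcases I.eq_empty_or_nonempty with rfl | ⟨a, ha⟩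
      · simp
      · have h1 : (S a).card ≤ (I.biUnion S).card :=
          Finset.card_le_card (Finset.subset_biUnion_of_mem S ha)
        have h2 := Finset.card_le_univ I
        rw [Fintype.card_fin] at h2
        rw [hS] at h1
        omega)
    exact ⟨g, by simp [hg, hg']⟩
  obtain ⟨g, hg, hmax⟩ := Finset.exists_max_image _ (fun g : Fin s → ℕ => ∑ a, G a (g a)) hne
  simp only [Finset.mem_filter, Fintype.mem_piFinset] at hg hmax
  obtain ⟨hgS, hginj⟩ := hg
  refine ⟨g, hginj, hgS, ?_⟩
  have key : ∀ a, ∀ x ∈ S a, G a x ≤ G a (g a) + ∑ a', if x = g a' then G a' (g a') else 0 := by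
    intro a x hx
    by_cases hxg : ∃ a', g a' = x
    · obtain ⟨a', rfl⟩ := hxg
      have hsum : (∑ b, if g a' = g b then G b (g b) else 0) = G a' (g a') := by
        simp [hginj.eq_iff]
      rw [hsum]
      by_cases haa : a' = a
      · subst haa
        linarith [hG a' (g a')]
      obtain ⟨y, hyS, hy⟩ : ∃ y ∈ S a', y ∉ Finset.univ.image g := by
        apply Finset.exists_mem_notMem_of_card_lt_card
        rw [Finset.card_image_of_injective _ hginj, hS]
        simpa using hs
      have hy' : ∀ b, g b ≠ y := by simpa using hy
      -- `a` takes over the element of `a'`, which moves to a free element `y`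
      have := hmax (Function.update (Function.update g a' y) a (g a')) ⟨?_, ?_⟩
      · rw [← Finset.add_sum_erase _ _ (Finset.mem_univ a),
          ← Finset.add_sum_erase _ _ (Finset.mem_univ a),
          ← Finset.add_sum_erase (a := a') _ _ (by simp [haa]),
          ← Finset.add_sum_erase (a := a') (Finset.univ.erase a) _ (by simp [haa])] at this
        rw [Finset.sum_congr rfl (g := fun b => G b (g b))] at this
        · simp [Function.update_of_ne haa] at this
          linarith [hG a' y]
        · intro b hb
          simp at hb
          simp [Function.update_of_ne hb.1, Function.update_of_ne hb.2]
      · intro b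
        by_cases h1 : b = a
        · subst h1; simpa using hx
        · rw [Function.update_of_ne h1]
          by_cases h2 : b = a'
          · subst h2; simpa using hyS
          · rw [Function.update_of_ne h2]; exact hgS b
      · intro b b' hbb
        simp only [Function.update_apply] at hbb
        have := @hginj
        split_ifs at hbb <;> grind [Function.Injective]
    · have hfree : ∀ b, g b ≠ x := by simpa using hxg
      have := hmax (Function.update g a x) ⟨?_, ?_⟩
      · rw [← Finset.add_sum_erase _ _ (Finset.mem_univ a),
          ← Finset.add_sum_erase _ _ (Finset.mem_univ a)] at this
        rw [Finset.sum_congr rfl (g := fun b => G b (g b))] at this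
        · simp at this
          have h0 : (0 : ℝ) ≤ ∑ a', if x = g a' then G a' (g a') else 0 :=
            Finset.sum_nonneg fun b _ => by split_ifs; exacts [hG _ _, le_rfl]
          linarith
        · intro b hb
          simp at hb
          simp [Function.update_of_ne hb]
      · intro b
        by_cases h1 : b = a
        · subst h1; simpa using hx
        · rw [Function.update_of_ne h1]; exact hgS b
      · intro b b' hbb
        simp only [Function.update_apply] at hbb
        split_ifs at hbb <;> grind [Function.Injective]
  have h2 : ∀ a, ∑ x ∈ S a, G a x ≤ r * G a (g a) + ∑ a', G a' (g a') := by
    intro a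
    refine (Finset.sum_le_sum (key a)).trans ?_
    rw [Finset.sum_add_distrib, Finset.sum_const, hS, nsmul_eq_mul, Finset.sum_comm]
    gcongr with a' _
    rw [Finset.sum_ite_eq']
    split_ifs
    exacts [le_rfl, hG _ _]
  refine (Finset.sum_le_sum fun a _ => h2 a).trans ?_
  rw [Finset.sum_add_distrib, ← Finset.mul_sum, Finset.sum_const, nsmul_eq_mul]
  simp
  linarith

/-! ### The instance -/

/-- The vector of item `t`, given the sets `S` and colours `c`. Coordinate `x` stands for the pair
(item `x / M`, block `x % M`), and item `t` lies in block `t / s`. An item has a one at all its own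
coordinates, so these reveal nothing about its colour; it has a one at the coordinate of item `i`
and its own block if `i` is in the same block, or if `i` is in an earlier block and `c i ∉ S t`. -/
def vec (d s M : ℕ) (S : ℕ → Finset ℕ) (c : ℕ → ℕ) (t : ℕ) (x : Fin d) : ℕ :=
  if x.1 / M = t ∨ (x.1 % M = t / s ∧
      (x.1 / M / s = t / s ∨ (x.1 / M / s < t / s ∧ c (x.1 / M) ∉ S t))) then 1 else 0

lemma vec_le_one (d s M : ℕ) (S : ℕ → Finset ℕ) (c : ℕ → ℕ) (t : ℕ) (x : Fin d) :
    vec d s M S c t x ≤ 1 := by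
  unfold vec; split_ifs <;> simp

/-- The vector of `t` depends only on `S t` and on the colours of earlier blocks. -/
lemma vec_congr {d s M : ℕ} {S S' : ℕ → Finset ℕ} {c c' : ℕ → ℕ} {t : ℕ} (hS : S t = S' t)
    (hc : ∀ i, i / s < t / s → c i = c' i) : vec d s M S c t = vec d s M S' c' t := by
  funext x
  unfold vec
  rw [hS]
  congr 1
  have := hc (x.1 / M)
  grind

lemma algAssign_congr {d : ℕ} (A : List (Fin d → ℕ) → ℕ) {v v' : ℕ → Fin d → ℕ} {t : ℕ}
    (h : ∀ i ≤ t, v i = v' i) : algAssign d A v t = algAssign d A v' t := by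
  unfold algAssign
  congr 1
  apply List.map_congr_left
  intro i hi
  exact h i (by simp at hi; omega)

/-- The first `n` sets and colours are admissible: `S i` is an `r`-subset of the `2 r` colours,
`c i ∈ S i`, and colours within a block of length `s` are distinct. -/
structure Good (r s : ℕ) (S : ℕ → Finset ℕ) (c : ℕ → ℕ) (n : ℕ) : Prop where
  subset : ∀ i < n, S i ⊆ Finset.range (2 * r)
  card : ∀ i < n, (S i).card = r
  mem : ∀ i < n, c i ∈ S i
  inj : ∀ i < n, ∀ j < n, i / s = j / s → c i = c j → i = j

/-- The colour classes are feasible bins. -/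
lemma opt_le {d r s M n : ℕ} {S : ℕ → Finset ℕ} {c : ℕ → ℕ} (h : Good r s S c n) :
    vbpOPT d 1 n (vec d s M S c) ≤ 2 * r := by
  apply Nat.sInf_le
  refine ⟨c, fun i hi => Finset.mem_range.1 (h.subset i hi (h.mem i hi)), fun j x => ?_⟩
  have key : ∀ i < n, ∀ t < n, i ≠ t → c i = c t → vec d s M S c i x = 1 →
      vec d s M S c t x = 1 → False := by
    intro i hi t ht hit hc h1 h2
    have hi' := h.mem i hi
    have ht' := h.mem t ht
    have hj := h.inj i hi t ht
    unfold vec at h1 h2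
    simp only [ite_eq_left_iff, zero_ne_one, imp_false, not_not] at h1 h2
    grind
  by_contra hlt
  push Not at hlt
  rw [← Finset.sum_filter] at hlt
  obtain ⟨i, hi, hi0⟩ := Finset.exists_ne_zero_of_sum_ne_zero (by omega :
    ∑ a ∈ Finset.range n with c a = j, vec d s M S c a x ≠ 0)
  rw [← Finset.add_sum_erase _ _ hi] at hlt
  have hi1 := vec_le_one d s M S c i x
  obtain ⟨t, ht, ht0⟩ := Finset.exists_ne_zero_of_sum_ne_zero (by omega :
    ∑ a ∈ (Finset.range n |>.filter (fun a => c a = j)).erase i, vec d s M S c a x ≠ 0)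
  have ht1 := vec_le_one d s M S c t x
  simp at hi ht
  exact key i hi.1 t ht.2.1 (Ne.symm ht.1) (by rw [hi.2, ht.2.2]) (by omega) (by omega)

lemma opt_pos {d n : ℕ} (v : ℕ → Fin d → ℕ) (hv : ∀ i x, v i x ≤ 1) (hn : 1 ≤ n) :
    1 ≤ vbpOPT d 1 n v := by
  have hne : {m | ∃ f : ℕ → ℕ, (∀ i < n, f i < m) ∧
    ∀ j, ∀ r : Fin d, (∑ i ∈ Finset.range n, if f i = j then v i r else 0) ≤ 1}.Nonempty := by
    refine ⟨n, id, fun i hi => hi, fun j x => ?_⟩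
    simp only [id, Finset.sum_ite_eq']
    split_ifs
    exacts [hv _ _, by simp]
  obtain ⟨f, hf, -⟩ := Nat.sInf_mem hne
  exact (Nat.zero_le _).trans_lt (hf 0 hn)

/-- Two items in the same bin of a valid algorithm have no common nonzero coordinate. -/
lemma valid_conflict {d : ℕ} {A : List (Fin d → ℕ) → ℕ} (hA : ValidAlg d 1 A)
    {v : ℕ → Fin d → ℕ} (hv : ∀ i x, v i x ≤ 1) {i t : ℕ} (hit : i ≠ t)
    (hb : algAssign d A v i = algAssign d A v t) (x : Fin d) (hi : v i x = 1) :
    v t x = 0 := by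
  have h := hA (i + t + 1) v hv (algAssign d A v t) x
  rw [← Finset.sum_filter] at h
  have h2 : ∑ k ∈ {i, t}, v k x ≤ ∑ k ∈ Finset.range (i + t + 1) with
      algAssign d A v k = algAssign d A v t, v k x := by
    apply Finset.sum_le_sum_of_subset
    intro k hk
    simp at hk
    rcases hk with rfl | rfl
    · simp [hb]
    · simp
  rw [Finset.sum_pair hit] at h2
  omega

section
variable {d s M : ℕ} {A : List (Fin d → ℕ) → ℕ} {S : ℕ → Finset ℕ} {c : ℕ → ℕ}

lemma coord_lt (hd : s * M * M ≤ d) {i T : ℕ} (hi : i < s * M) (hT : T < M) : i * M + T < d := by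
  have : (i + 1) * M ≤ s * M * M := Nat.mul_le_mul_right M hi
  have h2 : (i + 1) * M = i * M + M := by ring
  omega

lemma block_ne (hd : s * M * M ≤ d) (hA : ValidAlg d 1 A) {i t : ℕ} (ht : t < s * M)
    (hit : i ≠ t) (hb : algAssign d A (vec d s M S c) i = algAssign d A (vec d s M S c) t) :
    i / s ≠ t / s := by
  intro hblock
  have hT : t / s < M := Nat.div_lt_of_lt_mul ht
  have h1 : (t * M + t / s) / M = t := by
    rw [mul_comm, Nat.mul_add_div ((Nat.zero_le _).trans_lt hT), Nat.div_eq_of_lt hT, add_zero]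
  have h2 : (t * M + t / s) % M = t / s := by
    rw [mul_comm, Nat.mul_add_mod, Nat.mod_eq_of_lt hT]
  have := valid_conflict hA (vec_le_one d s M S c) hit hb ⟨t * M + t / s, coord_lt hd ht hT⟩
    (by simp [vec, h1, h2, hblock])
  simp [vec, h1] at this

lemma mem_of_same_bin (hd : s * M * M ≤ d) (hA : ValidAlg d 1 A) {i t : ℕ} (ht : t < s * M)
    (hit : i / s < t / s)
    (hb : algAssign d A (vec d s M S c) i = algAssign d A (vec d s M S c) t) : c i ∈ S t := by
  by_contra hc
  have hT : t / s < M := Nat.div_lt_of_lt_mul ht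
  have hlt : i < t := by
    by_contra h
    exact absurd (Nat.div_le_div_right (c := s) (not_lt.1 h)) (by omega)
  have h1 : (i * M + t / s) / M = i := by
    rw [mul_comm, Nat.mul_add_div ((Nat.zero_le _).trans_lt hT), Nat.div_eq_of_lt hT, add_zero]
  have h2 : (i * M + t / s) % M = t / s := by
    rw [mul_comm, Nat.mul_add_mod, Nat.mod_eq_of_lt hT]
  have := valid_conflict hA (vec_le_one d s M S c) hlt.ne hb
    ⟨i * M + t / s, coord_lt hd (hlt.trans ht) hT⟩ (by simp [vec, h1])
  simp [vec, h1, h2, hit, hc] at this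
end

section
variable {d r s M : ℕ} {Ω : Type} [Fintype Ω] {μ : Ω → ℝ} {A : Ω → List (Fin d → ℕ) → ℕ}

lemma hue_congr {f f' c c' : ℕ → ℕ} {n : ℕ} (hf : ∀ i < n, f i = f' i) (hc : ∀ i < n, c i = c' i)
    (b : ℕ) : hue f c n b = hue f' c' n b := by
  ext x
  simp only [hue, Finset.mem_image, Finset.mem_filter, Finset.mem_range]
  constructor
  · rintro ⟨i, ⟨h1, h2⟩, h3⟩
    exact ⟨i, ⟨h1, by rw [← hf i h1, h2]⟩, by rw [← hc i h1, h3]⟩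
  · rintro ⟨i, ⟨h1, h2⟩, h3⟩
    exact ⟨i, ⟨h1, by rw [hf i h1, h2]⟩, by rw [hc i h1, h3]⟩

/-! ### Choosing the instance block by block -/

/-- After `n` items, the sets of the next `m` items can be chosen so that each of them equals the
hue (after `n` items) of the bin receiving its item with probability at most `1/4`: every algorithm
has at most as many nonempty hues as bins, and there are `C(2r, r) ≥ 4 β` candidate sets. -/
lemma choose_sets (hr : 1 ≤ r) (hμ : ∀ ω, 0 ≤ μ ω) {β : ℝ}
    (hβ : 4 * β ≤ ((2 * r).choose r : ℝ)) (S : ℕ → Finset ℕ) (c : ℕ → ℕ) (n : ℕ)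
    (hE : ∑ ω, μ ω * (algBins d n (A ω) (vec d s M S c) : ℝ) ≤ β) (m : ℕ) :
    ∃ S' : ℕ → Finset ℕ, (∀ i < n, S' i = S i) ∧ ∀ a < m,
      S' (n + a) ∈ Finset.powersetCard r (Finset.range (2 * r)) ∧
      ∑ ω, μ ω * (if hue (algAssign d (A ω) (vec d s M S' c)) c n
        (algAssign d (A ω) (vec d s M S' c) (n + a)) = S' (n + a) then 1 else 0) ≤ 1 / 4 := by
  classical
  induction m with
  | zero => exact ⟨S, fun _ _ => rfl, fun a ha => absurd ha (by simp)⟩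
  | succ m ih =>
    obtain ⟨S₁, hS₁, hm⟩ := ih
    set P := Finset.powersetCard r (Finset.range (2 * r)) with hP
    have hPc : P.card = (2 * r).choose r := by simp [hP]
    -- varying the set of item `n + m` does not affect the earlier bins
    have hasg : ∀ X ω, ∀ t < n + m, algAssign d (A ω) (vec d s M (Function.update S₁ (n + m) X) c) t
        = algAssign d (A ω) (vec d s M S₁ c) t := by
      intro X ω t ht
      apply algAssign_congr
      intro i hi
      exact vec_congr (Function.update_of_ne (by omega) _ _) (fun _ _ => rfl)
    have hasg0 : ∀ ω, ∀ t < n, algAssign d (A ω) (vec d s M S₁ c) t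
        = algAssign d (A ω) (vec d s M S c) t := by
      intro ω t ht
      apply algAssign_congr
      intro i hi
      exact vec_congr (hS₁ i (by omega)) (fun _ _ => rfl)
    let bl : Finset ℕ → Ω → Prop := fun X ω =>
      hue (algAssign d (A ω) (vec d s M (Function.update S₁ (n + m) X) c)) c n
        (algAssign d (A ω) (vec d s M (Function.update S₁ (n + m) X) c) (n + m)) = X
    have hcount : ∀ ω, (∑ X ∈ P, if bl X ω then (1 : ℝ) else 0)
        ≤ algBins d n (A ω) (vec d s M S c) := by
      intro ω
      rw [Finset.sum_boole]
      norm_cast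
      refine (Finset.card_le_card (t := ((Finset.range n).image
        (algAssign d (A ω) (vec d s M S c))).image
        (hue (algAssign d (A ω) (vec d s M S c)) c n)) ?_).trans Finset.card_image_le
      intro X hX
      rw [Finset.mem_filter, hP, Finset.mem_powersetCard] at hX
      obtain ⟨⟨-, hXc⟩, hX⟩ := hX
      simp only [bl] at hX
      rw [hue_congr (f' := algAssign d (A ω) (vec d s M S c)) (c' := c)
        (fun i hi => by rw [hasg X ω i (by omega), hasg0 ω i hi]) (fun _ _ => rfl)] at hX
      rw [Finset.mem_image]
      refine ⟨_, ?_, hX⟩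
      obtain ⟨x, hx⟩ := Finset.card_pos.1 (by omega : 0 < X.card)
      rw [← hX] at hx
      simp only [hue, Finset.mem_image, Finset.mem_filter] at hx
      obtain ⟨i, ⟨hi, hib⟩, -⟩ := hx
      exact Finset.mem_image.2 ⟨i, hi, hib⟩
    obtain ⟨X, hX, hXb⟩ : ∃ X ∈ P, ∑ ω, μ ω * (if bl X ω then (1 : ℝ) else 0) ≤ 1 / 4 := by
      apply Finset.exists_le_of_sum_le
      · rw [← Finset.card_pos, hPc]
        exact Nat.choose_pos (by omega)
      · rw [Finset.sum_comm, Finset.sum_const, hPc, nsmul_eq_mul]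
        calc _ ≤ ∑ ω, μ ω * (algBins d n (A ω) (vec d s M S c) : ℝ) := by
              refine Finset.sum_le_sum fun ω _ => ?_
              rw [← Finset.mul_sum]
              exact mul_le_mul_of_nonneg_left (hcount ω) (hμ ω)
          _ ≤ _ := by linarith
    refine ⟨Function.update S₁ (n + m) X, fun i hi => ?_, fun a ha => ?_⟩
    · rw [Function.update_of_ne (by omega), hS₁ i hi]
    · rcases Nat.lt_succ_iff_lt_or_eq.1 ha with ha | rfl
      · rw [Function.update_of_ne (by omega)]
        refine ⟨(hm a ha).1, ?_⟩
        convert (hm a ha).2 using 5 with ω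
        rw [hasg X ω _ (by omega)]
        rw [hue_congr (fun i hi => hasg X ω i (by omega)) (fun _ _ => rfl)]
      · rw [Function.update_self]
        exact ⟨hX, hXb⟩

lemma hue_subset (hd : s * M * M ≤ d) {A : List (Fin d → ℕ) → ℕ}
    (hA : ValidAlg d 1 A) (S : ℕ → Finset ℕ) (c : ℕ → ℕ) {T t : ℕ} (ht : t < s * M)
    (hT : t / s = T) :
    hue (algAssign d A (vec d s M S c)) c (s * T) (algAssign d A (vec d s M S c) t) ⊆ S t := by
  intro x hx
  simp only [hue, Finset.mem_image, Finset.mem_filter, Finset.mem_range] at hx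
  obtain ⟨i, ⟨hi, hb⟩, rfl⟩ := hx
  exact mem_of_same_bin hd hA ht (by rw [hT]; exact Nat.div_lt_of_lt_mul hi) hb

/-- Within a block the relevant hue is the one at the start of the block, as all items of a block
lie in different bins. -/
lemma hue_block (hs : 0 < s) (hd : s * M * M ≤ d) {A : List (Fin d → ℕ) → ℕ}
    (hA : ValidAlg d 1 A) (S : ℕ → Finset ℕ) (c : ℕ → ℕ) {T t : ℕ} (ht : t < s * M)
    (hT : t / s = T) :
    hue (algAssign d A (vec d s M S c)) c t (algAssign d A (vec d s M S c) t)
      = hue (algAssign d A (vec d s M S c)) c (s * T) (algAssign d A (vec d s M S c) t) := by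
  unfold hue
  congr 1
  ext i
  simp only [Finset.mem_filter, Finset.mem_range]
  have hle : s * T ≤ t := hT ▸ Nat.mul_div_le t s
  refine ⟨fun ⟨h1, h2⟩ => ⟨?_, h2⟩, fun ⟨h1, h2⟩ => ⟨by omega, h2⟩⟩
  have hne := block_ne hd hA ht h1.ne h2
  have hle' : i / s ≤ t / s := Nat.div_le_div_right h1.le
  rw [mul_comm]
  exact (Nat.div_lt_iff_lt_mul hs).1 (by omega)

/-- One more block can be appended with expected gain at least `3 s / 8`. The colours of the new
block do not influence the packing of that block, so they are chosen after all its bins are known. -/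
lemma extend_block (hs : 1 ≤ s) (hsr : s < r) (hd : s * M * M ≤ d) (hμ : ∀ ω, 0 ≤ μ ω)
    (hμ1 : ∑ ω, μ ω = 1) (hA : ∀ ω, ValidAlg d 1 (A ω)) {β : ℝ}
    (hβ : 4 * β ≤ ((2 * r).choose r : ℝ)) {T : ℕ} (hTM : T < M) {S : ℕ → Finset ℕ} {c : ℕ → ℕ}
    (hgood : Good r s S c (s * T))
    (hE : ∑ ω, μ ω * (algBins d (s * T) (A ω) (vec d s M S c) : ℝ) ≤ β) :
    ∃ S' c', Good r s S' c' (s * (T + 1)) ∧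
      ∑ ω, μ ω * ∑ t ∈ Finset.range (s * T), gain r (algAssign d (A ω) (vec d s M S c)) c t
        + 3 / 8 * s ≤
      ∑ ω, μ ω * ∑ t ∈ Finset.range (s * (T + 1)),
        gain r (algAssign d (A ω) (vec d s M S' c')) c' t := by
  classical
  obtain ⟨S', hS', hblk⟩ := choose_sets (by omega) hμ hβ S c (s * T) hE s
  have hdiv : ∀ a < s, (s * T + a) / s = T := fun a ha => by
    rw [Nat.mul_add_div hs, Nat.div_eq_of_lt ha, add_zero]
  have hlt : ∀ a < s, s * T + a < s * M := fun a ha => by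
    have : s * (T + 1) ≤ s * M := Nat.mul_le_mul_left s hTM
    rw [mul_add] at this
    omega
  set F : Ω → ℕ → ℕ := fun ω => algAssign d (A ω) (vec d s M S' c) with hF
  let H : Ω → Fin s → Finset ℕ := fun ω a => hue (F ω) c (s * T) (F ω (s * T + a))
  have hHS : ∀ ω a, H ω a ⊆ S' (s * T + a) := fun ω a =>
    hue_subset hd (hA ω) S' c (hlt a a.2) (hdiv a a.2)
  have hcard : ∀ a : Fin s, (S' (s * T + a)).card = r := fun a =>
    (Finset.mem_powersetCard.1 (hblk a a.2).1).2
  let G : Fin s → ℕ → ℝ := fun a x =>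
    ∑ ω, μ ω * (if x ∈ H ω a then 0 else weight r (H ω a).card)
  have hG0 : ∀ a x, 0 ≤ G a x := fun a x => Finset.sum_nonneg fun ω _ =>
    mul_nonneg (hμ ω) (by split_ifs; exacts [le_rfl, weight_nonneg _ _])
  obtain ⟨g, hginj, hgS, hgsum⟩ := exists_assignment hsr (fun a : Fin s => S' (s * T + a)) hcard
    G hG0
  -- averaged over `S'`, an item gains `1` unless the hue of its bin is the whole of `S'`
  have hGsum : ∀ a : Fin s, (r : ℝ) * (3 / 4) ≤ ∑ x ∈ S' (s * T + a), G a x := by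
    intro a
    have h1 : ∑ x ∈ S' (s * T + a), G a x = ∑ ω, μ ω *
        (r * (1 - if H ω a = S' (s * T + a) then 1 else 0)) := by
      simp only [G]
      rw [Finset.sum_comm]
      refine Finset.sum_congr rfl fun ω _ => ?_
      rw [← Finset.mul_sum]
      congr 1
      rw [← Finset.sum_filter_add_sum_filter_not _ (fun x => x ∈ H ω a)]
      rw [Finset.sum_eq_zero (by intro x hx; simp [(Finset.mem_filter.1 hx).2]), zero_add,
        Finset.sum_congr rfl (g := fun _ => weight r (H ω a).card)
          (by intro x hx; simp [(Finset.mem_filter.1 hx).2]), Finset.sum_const,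
        Finset.filter_notMem_eq_sdiff, Finset.card_sdiff_of_subset (hHS ω a), hcard, nsmul_eq_mul]
      split_ifs with hfull
      · rw [hfull, hcard]; simp
      · have hlt : (H ω a).card < r := by
          rw [← hcard a]
          exact Finset.card_lt_card ((hHS ω a).ssubset_of_ne hfull)
        have : ((r - (H ω a).card : ℕ) : ℝ) ≠ 0 := by
          rw [Nat.cast_ne_zero]; omega
        unfold weight
        field_simp
        simp
    rw [h1]
    have h2 := (hblk a a.2).2
    calc (r : ℝ) * (3 / 4) ≤ r * (1 - ∑ ω, μ ω * (if H ω a = S' (s * T + a) then 1 else 0)) := by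
          apply mul_le_mul_of_nonneg_left _ (Nat.cast_nonneg r)
          simp only [H, hF]
          linarith
      _ = _ := by
          simp only [mul_sub, mul_one, Finset.sum_sub_distrib, Finset.mul_sum]
          rw [← Finset.sum_mul, hμ1, one_mul]
          congr 1
          exact Finset.sum_congr rfl fun ω _ => by ring
  have hgain : 3 / 8 * (s : ℝ) ≤ ∑ a, G a (g a) := by
    have h1 : (s : ℝ) * (r * (3 / 4)) ≤ (r + s) * ∑ a, G a (g a) := by
      refine le_trans ?_ hgsum
      have := Finset.card_nsmul_le_sum Finset.univ
        (fun a : Fin s => ∑ x ∈ S' (s * T + a), G a x) _ (fun a _ => hGsum a)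
      simpa using this
    have h2 : 0 ≤ ∑ a, G a (g a) := Finset.sum_nonneg fun a _ => hG0 _ _
    have h3 : (s : ℝ) < r := by exact_mod_cast hsr
    have h4 : (0 : ℝ) < r := by linarith [Nat.cast_nonneg (α := ℝ) s]
    have h5 : (r : ℝ) * (3 / 4 * s) ≤ r * (2 * ∑ a, G a (g a)) := by nlinarith
    have := le_of_mul_le_mul_left h5 h4
    linarith
  let c' : ℕ → ℕ := fun i => if h : i - s * T < s ∧ s * T ≤ i then g ⟨i - s * T, h.1⟩ else c i
  have hc'old : ∀ i < s * T, c' i = c i := fun i hi => dif_neg (by omega)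
  have hc'new : ∀ a : Fin s, c' (s * T + a) = g a := fun a => by
    have : (s * T + a.1) - s * T < s ∧ s * T ≤ s * T + a.1 := by have := a.2; omega
    simp only [c']
    rw [dif_pos this]
    congr 1
    ext
    simp
  have hsplit : ∀ i < s * (T + 1), i < s * T ∨ ∃ a : Fin s, i = s * T + a := by
    intro i hi
    rw [mul_add, mul_one] at hi
    by_cases h : i < s * T
    · exact Or.inl h
    · exact Or.inr ⟨⟨i - s * T, by omega⟩, by simp; omega⟩
  have hasg : ∀ ω, ∀ t < s * (T + 1), algAssign d (A ω) (vec d s M S' c') t = F ω t := by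
    intro ω t ht
    apply algAssign_congr
    intro i hi
    refine vec_congr rfl fun j hj => hc'old j ?_
    have h1 : i / s < T + 1 := Nat.div_lt_of_lt_mul (by omega)
    rw [mul_comm]
    exact (Nat.div_lt_iff_lt_mul hs).1 (by omega)
  have hasgS : ∀ ω, ∀ t < s * T, F ω t = algAssign d (A ω) (vec d s M S c) t := by
    intro ω t ht
    apply algAssign_congr
    intro i hi
    exact vec_congr (hS' i (by omega)) fun _ _ => rfl
  have hTs : s * T < s * (T + 1) := by rw [mul_add]; omega
  refine ⟨S', c', ⟨?_, ?_, ?_, ?_⟩, ?_⟩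
  · intro i hi
    rcases hsplit i hi with h | ⟨a, rfl⟩
    · rw [hS' i h]; exact hgood.subset i h
    · exact (Finset.mem_powersetCard.1 (hblk a a.2).1).1
  · intro i hi
    rcases hsplit i hi with h | ⟨a, rfl⟩
    · rw [hS' i h]; exact hgood.card i h
    · exact hcard a
  · intro i hi
    rcases hsplit i hi with h | ⟨a, rfl⟩
    · rw [hS' i h, hc'old i h]; exact hgood.mem i h
    · rw [hc'new]; exact hgS a
  · intro i hi j hj hij hc
    rcases hsplit i hi with h | ⟨a, rfl⟩ <;> rcases hsplit j hj with h' | ⟨b, rfl⟩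
    · rw [hc'old i h, hc'old j h'] at hc
      exact hgood.inj i h j h' hij hc
    · rw [hdiv b b.2] at hij
      have := Nat.div_lt_of_lt_mul h
      omega
    · rw [hdiv a a.2] at hij
      have := Nat.div_lt_of_lt_mul h'
      omega
    · rw [hc'new, hc'new] at hc
      rw [hginj hc]
  · have hstep : ∀ ω, ∑ t ∈ Finset.range (s * (T + 1)),
        gain r (algAssign d (A ω) (vec d s M S' c')) c' t =
        ∑ t ∈ Finset.range (s * T), gain r (algAssign d (A ω) (vec d s M S c)) c t +
        ∑ a : Fin s, (if g a ∈ H ω a then 0 else weight r (H ω a).card) := by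
      intro ω
      rw [mul_add, mul_one, Finset.sum_range_add, Finset.sum_range
        (fun x => gain r (algAssign d (A ω) (vec d s M S' c')) c' (s * T + x))]
      congr 1
      · refine Finset.sum_congr rfl fun t ht => ?_
        rw [Finset.mem_range] at ht
        unfold gain
        rw [hc'old t ht, hasg ω t (by omega), hasgS ω t ht,
          hue_congr (f' := algAssign d (A ω) (vec d s M S c)) (c' := c)
            (fun i hi => by rw [hasg ω i (by omega), hasgS ω i (by omega)])
            (fun i hi => hc'old i (by omega))]
      · refine Finset.sum_congr rfl fun a _ => ?_
        unfold gain
        rw [hue_block hs hd (hA ω) S' c' (hlt a a.2) (hdiv a a.2), hc'new,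
          hasg ω (s * T + a) (by rw [mul_add]; have := a.2; omega),
          hue_congr (f' := F ω) (c' := c) (fun i hi => hasg ω i (by omega)) hc'old]
    simp_rw [hstep]
    simp only [mul_add (μ _), Finset.sum_add_distrib]
    refine add_le_add le_rfl ?_
    refine hgain.trans_eq ?_
    simp only [G]
    rw [Finset.sum_comm]
    exact Finset.sum_congr rfl fun ω _ => by rw [Finset.mul_sum]

/-- If `β` is at most a quarter of the number of `r`-sets and `β` bins cannot absorb the gain
`3 s / 8` of each of `M` blocks, some admissible instance has expected cost above `β`. -/
lemma exists_instance (hs : 1 ≤ s) (hsr : s < r) (hd : s * M * M ≤ d)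
    (hμ : ∀ ω, 0 ≤ μ ω) (hμ1 : ∑ ω, μ ω = 1) (hA : ∀ ω, ValidAlg d 1 (A ω)) {β : ℝ}
    (hβ0 : 0 ≤ β) (hβ : 4 * β ≤ ((2 * r).choose r : ℝ))
    (hlarge : β * (2 * r * √r) < 3 / 8 * (s * M)) :
    ∃ n : ℕ, 1 ≤ n ∧ ∃ S c, Good r s S c n ∧
      β < ∑ ω, μ ω * (algBins d n (A ω) (vec d s M S c) : ℝ) := by
  by_contra hcon
  push Not at hcon
  have hE : ∀ T S c, Good r s S c (s * T) →
      ∑ ω, μ ω * (algBins d (s * T) (A ω) (vec d s M S c) : ℝ) ≤ β := by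
    intro T S c h
    rcases Nat.eq_zero_or_pos (s * T) with h0 | h0
    · rw [h0]; simpa [algBins] using hβ0
    · exact hcon _ h0 S c h
  have hind : ∀ T ≤ M, ∃ S c, Good r s S c (s * T) ∧ 3 / 8 * ((s : ℝ) * T) ≤
      ∑ ω, μ ω * ∑ t ∈ Finset.range (s * T),
        gain r (algAssign d (A ω) (vec d s M S c)) c t := by
    intro T
    induction T with
    | zero =>
      intro _
      exact ⟨fun _ => ∅, fun _ => 0, ⟨by simp, by simp, by simp, by simp⟩, by simp⟩
    | succ T ih =>
      intro hT
      obtain ⟨S, c, hg, hsum⟩ := ih (by omega)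
      obtain ⟨S', c', hg', hsum'⟩ :=
        extend_block hs hsr hd hμ hμ1 hA hβ (by omega : T < M) hg (hE T S c hg)
      refine ⟨S', c', hg', le_trans ?_ hsum'⟩
      push_cast
      linarith
  obtain ⟨S, c, hg, hsum⟩ := hind M le_rfl
  have h1 : ∑ ω, μ ω * ∑ t ∈ Finset.range (s * M),
      gain r (algAssign d (A ω) (vec d s M S c)) c t ≤
      (∑ ω, μ ω * (algBins d (s * M) (A ω) (vec d s M S c) : ℝ)) * (2 * r * √r) := by
    rw [Finset.sum_mul]
    refine Finset.sum_le_sum fun ω _ => ?_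
    rw [mul_assoc]
    exact mul_le_mul_of_nonneg_left (sum_gain_le _ _ _ _) (hμ ω)
  have h2 := mul_le_mul_of_nonneg_right (hE M S c hg) (by positivity : 0 ≤ 2 * (r : ℝ) * √r)
  linarith

end

end VBP

/-! ### Choice of parameters -/

/-- Randomized lower bound, B = 1: for all large enough d and every valid randomized
online algorithm (a finite probability space with a family of valid deterministic
algorithms), there is an instance with OPT ≤ log₂(√(2d)−1) on which the expected number
of bins, divided by OPT, exceeds (√(2d)−1)/(16(log₂(√(2d)−1))²). -/
theorem randomized_lower_bound_B_one :
    ∃ d₀ : ℕ, ∀ d : ℕ, d₀ ≤ d →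
      ∀ (Ω : Type) [Fintype Ω] (μ : Ω → ℝ), (∀ ω, 0 ≤ μ ω) → (∑ ω, μ ω) = 1 →
      ∀ A : Ω → (List (Fin d → ℕ) → ℕ), (∀ ω, ValidAlg d 1 (A ω)) →
      ∃ n : ℕ, 1 ≤ n ∧ ∃ v : ℕ → Fin d → ℕ, (∀ i, ∀ r : Fin d, v i r ≤ 1) ∧
        (vbpOPT d 1 n v : ℝ) ≤ Real.logb 2 (Real.sqrt (2 * d) - 1) ∧
        (Real.sqrt (2 * d) - 1) / (16 * (Real.logb 2 (Real.sqrt (2 * d) - 1)) ^ 2)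
          < (∑ ω, μ ω * (algBins d n (A ω) v : ℝ)) / (vbpOPT d 1 n v : ℝ) := by
  classical
  refine ⟨200, fun d hd Ω _ μ hμ hμ1 A hA => ?_⟩
  set N : ℝ := √(2 * d) - 1 with hN
  set L : ℝ := Real.logb 2 N with hL
  have hd' : (200 : ℝ) ≤ d := by exact_mod_cast hd
  have hsq : √(2 * (d : ℝ)) ^ 2 = 2 * d := Real.sq_sqrt (by positivity)
  have hsq0 : 0 ≤ √(2 * (d : ℝ)) := Real.sqrt_nonneg _
  have hN16 : 16 ≤ N := by nlinarith
  have hNpos : 0 < N := by linarith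
  have h2L : (2 : ℝ) ^ L = N := Real.rpow_logb (by norm_num) (by norm_num) hNpos
  have hL4 : 4 ≤ L := by
    rw [hL, Real.le_logb_iff_rpow_le (by norm_num) hNpos]
    norm_num
    exact hN16
  set r : ℕ := ⌊L / 2⌋₊ with hr
  have hr1 : (r : ℝ) ≤ L / 2 := Nat.floor_le (by linarith)
  have hr2 : L / 2 < r + 1 := Nat.lt_floor_add_one _
  have hr3 : 2 ≤ r := Nat.le_floor (by push_cast; linarith)
  have hr3' : (2 : ℝ) ≤ r := by exact_mod_cast hr3
  obtain ⟨s, hs⟩ : ∃ s, r = s + 1 := ⟨r - 1, by omega⟩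
  have hsR : (r : ℝ) = s + 1 := by rw [hs]; push_cast; rfl
  have hs1 : 1 ≤ s := by omega
  -- `4 ^ r ≥ N / 4`
  have h4r : N ≤ 4 * 4 ^ r := by
    have h1 : (2 : ℝ) ^ L ≤ 2 ^ ((2 * r + 2 : ℕ) : ℝ) :=
      Real.rpow_le_rpow_of_exponent_le (by norm_num) (by push_cast; linarith)
    rw [h2L, Real.rpow_natCast, pow_add, pow_mul] at h1
    norm_num at h1
    linarith
  have hchoose : N ≤ 8 * r * ((2 * r).choose r : ℝ) := by
    have h1 := Nat.four_pow_le_two_mul_self_mul_centralBinom r (by omega)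
    rw [Nat.centralBinom_eq_two_mul_choose] at h1
    have h2 : (4 : ℝ) ^ r ≤ 2 * r * ((2 * r).choose r : ℝ) := by exact_mod_cast h1
    linarith
  -- the logarithm is far below the dimension
  have h2r : (2 * r : ℝ) ≤ d := by
    have h1 : (r : ℝ) < 2 ^ r := by exact_mod_cast Nat.lt_two_pow_self
    have h2 : ((2 : ℝ) ^ r) ^ 2 ≤ N := by
      rw [← h2L, ← pow_mul, ← Real.rpow_natCast]
      exact Real.rpow_le_rpow_of_exponent_le (by norm_num) (by push_cast; linarith)
    nlinarith
  have hsd : s ≤ d := by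
    have : (s : ℝ) ≤ d := by linarith
    exact_mod_cast this
  set M : ℕ := Nat.sqrt (d / s) with hM
  have hM1 : 1 ≤ M := by
    rw [hM, Nat.le_sqrt]
    rw [one_mul]
    exact Nat.div_pos hsd hs1
  have hMd : s * M * M ≤ d := by
    have h1 := Nat.sqrt_le (d / s)
    rw [mul_assoc]
    exact (Nat.mul_le_mul_left s h1).trans (Nat.mul_div_le d s)
  have hMd2 : d < s * ((M + 1) * (M + 1)) := by
    have h1 : d / s < (M + 1) * (M + 1) := Nat.lt_succ_sqrt (d / s)
    rw [mul_comm]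
    exact (Nat.div_lt_iff_lt_mul hs1).1 h1
  set β : ℝ := N / (16 * L) with hβdef
  have hβ0 : 0 ≤ β := by positivity
  have hβ : 4 * β ≤ ((2 * r).choose r : ℝ) := by
    have hC : (0 : ℝ) ≤ ((2 * r).choose r : ℝ) := Nat.cast_nonneg _
    rw [hβdef, mul_div_assoc', div_le_iff₀ (by linarith)]
    nlinarith
  have hlarge : β * (2 * r * √r) < 3 / 8 * (s * M) := by
    have hMR : (1 : ℝ) ≤ M := by exact_mod_cast hM1
    have hsR1 : (1 : ℝ) ≤ s := by exact_mod_cast hs1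
    have h1 : (d : ℝ) < s * ((M + 1) * (M + 1)) := by exact_mod_cast hMd2
    have h2 : (d : ℝ) < s * (4 * M ^ 2) := by nlinarith
    have hsqr : √(r : ℝ) ^ 2 = r := Real.sq_sqrt (by positivity)
    -- comparison of squares, using `r ≤ 2 s`
    have h3 : √(2 * (d : ℝ)) * √r < 6 * (s * M) := by
      apply lt_of_pow_lt_pow_left₀ 2 (by positivity)
      rw [mul_pow, hsq, hsqr]
      have h4 : (r : ℝ) ≤ 2 * s := by linarith
      have h5 : 2 * (d : ℝ) * r ≤ 2 * d * (2 * s) := by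
        apply mul_le_mul_of_nonneg_left h4; positivity
      have h6 : (d : ℝ) * s < s * (4 * M ^ 2) * s := mul_lt_mul_of_pos_right h2 (by linarith)
      nlinarith
    have h4 : N * √r ≤ √(2 * (d : ℝ)) * √r :=
      mul_le_mul_of_nonneg_right (by rw [hN]; linarith) (Real.sqrt_nonneg _)
    rw [hβdef, div_mul_eq_mul_div, div_lt_iff₀ (by linarith)]
    have h5 : N * (2 * r * √r) < 2 * r * (6 * (s * M)) := by nlinarith
    have h6 : 2 * (r : ℝ) * (6 * (s * M)) ≤ L * (6 * (s * M)) :=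
      mul_le_mul_of_nonneg_right (by linarith) (by positivity)
    linarith
  obtain ⟨n, hn, S, c, hgood, hbig⟩ :=
    VBP.exists_instance hs1 (by omega : s < r) hMd hμ hμ1 hA hβ0 hβ hlarge
  have hopt := VBP.opt_le (d := d) (M := M) hgood
  have hpos := VBP.opt_pos (VBP.vec d s M S c) (VBP.vec_le_one d s M S c) hn
  have hopt' : (vbpOPT d 1 n (VBP.vec d s M S c) : ℝ) ≤ L := by
    have : (vbpOPT d 1 n (VBP.vec d s M S c) : ℝ) ≤ 2 * r := by exact_mod_cast hopt
    linarith
  have hpos' : (0 : ℝ) < vbpOPT d 1 n (VBP.vec d s M S c) := by exact_mod_cast hpos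
  refine ⟨n, hn, VBP.vec d s M S c, VBP.vec_le_one d s M S c, hopt', ?_⟩
  rw [lt_div_iff₀ hpos']
  refine lt_of_le_of_lt ?_ hbig
  rw [hβdef]
  calc N / (16 * L ^ 2) * vbpOPT d 1 n (VBP.vec d s M S c) ≤ N / (16 * L ^ 2) * L :=
        mul_le_mul_of_nonneg_left hopt' (by positivity)
    _ = N / (16 * L) := by field_simp
end
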